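/- Let (L, Q) be an L∞-algebra with cohomology H = H(L, Q₁), and let f : H → L be a quasi-isomorphism of complexes (where H has zero differential). Then there exists an L∞-algebra structure \tilde Q on H with \tilde Q₁ = 0 and \tilde Q₂ equal to the bracket induced by Q₂ on cohomology, together with an L∞-quasi-isomorphism F from (H, \tilde Q) to (L, Q) whose first structure map F₁ equals f. -/

import Mathlib

open scoped TensorProduct
noncomputable section

/-- The Koszul sign of a permutation `θ` acting on homogeneous elements of degrees `d`. -/
def koszulSign (K : Type) [Field K] {n : ℕ} (d : Fin n → ℤ) (θ : Equiv.Perm (Fin n)) : K :=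
  ∏ p ∈ Finset.univ.filter (fun p : Fin n × Fin n => p.1 < p.2 ∧ θ p.2 < θ p.1),
    (-1:K) ^ (d (θ p.1) * d (θ p.2))

/-- Data of the cofree cocommutative coalgebra `F(Σ⁻¹V) = ⊕_{n≥1} Sⁿ(Σ⁻¹V)` cogenerated by a
graded vector space `V` (with grading `grV`):
* `C` is the underlying space, with comultiplication `comul` (the deshuffle coproduct),
* `word n v` is the product `v₀·…·v_n ∈ S^{n+1}(Σ⁻¹V) ⊆ C` of cogenerators,
* `wt n` is the `n`-th symmetric power `S^{n+1}(Σ⁻¹V)` and `grC` the internal (suspended)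
  degree grading,
* `xi` is the projection `C → V` onto the cogenerators,
* `par m` is the parity operator acting by `(−1)^{m·i}` on `grC i` (used to express the
  Koszul sign rule for tensor products of graded maps). -/
structure CofreeData (K : Type) [Field K] (V : Type) [AddCommGroup V] [Module K V]
    (grV : ℤ → Submodule K V) : Type 1 where
  C : Type
  [acg : AddCommGroup C]
  [mod : Module K C]
  comul : C →ₗ[K] (TensorProduct K C C)
  word : ∀ n : ℕ, MultilinearMap K (fun _ : Fin (n+1) => V) C
  grC : ℤ → Submodule K C
  wt : ℕ → Submodule K C
  xi : C →ₗ[K] V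
  par : ℤ → C →ₗ[K] C
  grC_internal : DirectSum.IsInternal grC
  wt_internal : DirectSum.IsInternal wt
  word_wt : ∀ (n : ℕ) (v : Fin (n+1) → V), word n v ∈ wt n
  word_grC : ∀ (n : ℕ) (d : Fin (n+1) → ℤ) (v : Fin (n+1) → V),
    (∀ i, v i ∈ grV (d i)) → word n v ∈ grC (∑ i, (d i - 1))
  word_symm : ∀ (n : ℕ) (d : Fin (n+1) → ℤ) (v : Fin (n+1) → V),
    (∀ i, v i ∈ grV (d i)) → ∀ θ : Equiv.Perm (Fin (n+1)),
      word n (fun i => v (θ i)) = koszulSign K (fun i => d i - 1) θ • word n v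
  xi_word₀ : ∀ v : V, xi (word 0 (fun _ => v)) = v
  xi_word : ∀ (n : ℕ) (v : Fin (n+2) → V), xi (word (n+1) v) = 0
  par_apply : ∀ (m i : ℤ), ∀ x ∈ grC i, par m x = ((-1:K)^(m*i)) • x
  word_span : ∀ n : ℕ, wt n ≤ Submodule.span K (Set.range (word n))
  /-- universal property of the symmetric powers: any multilinear map with the same graded
  symmetry factors (necessarily uniquely) through `word n`. -/
  word_factor : ∀ (n : ℕ) (W : Type) (_ : AddCommGroup W) (_ : Module K W)
    (φ : MultilinearMap K (fun _ : Fin (n+1) => V) W),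
    (∀ (d : Fin (n+1) → ℤ) (v : Fin (n+1) → V), (∀ i, v i ∈ grV (d i)) →
      ∀ θ : Equiv.Perm (Fin (n+1)),
        φ (fun i => v (θ i)) = koszulSign K (fun i => d i - 1) θ • φ v) →
    ∃ gmap : C →ₗ[K] W, ∀ v, gmap (word n v) = φ v
  /-- the deshuffle formula for the comultiplication on words. -/
  comul_word₀ : ∀ v : V, comul (word 0 (fun _ => v)) = 0
  comul_word : ∀ (n : ℕ) (d : Fin (n+2) → ℤ) (v : Fin (n+2) → V),
    (∀ i, v i ∈ grV (d i)) →
    comul (word (n+1) v)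
      = ∑ k : Fin (n+1), ∑ θ : Equiv.Perm (Fin (n+2)),
          (koszulSign K (fun i => d i - 1) θ *
            ((((n+1-(k:ℕ)).factorial * ((k:ℕ)+1).factorial : ℕ) : K))⁻¹) •
          ((word (k:ℕ) (fun i : Fin ((k:ℕ)+1) => v (θ (Fin.castLE (by have := k.isLt; omega) i)))) ⊗ₜ[K]
           (word (n-(k:ℕ)) (fun j : Fin (n-(k:ℕ)+1) => v (θ (⟨(k:ℕ)+1+(j:ℕ), by have := k.isLt; have := j.isLt; omega⟩ : Fin (n+2))))))

attribute [instance] CofreeData.acg CofreeData.mod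

variable {K : Type} [Field K] {V : Type} [AddCommGroup V] [Module K V]
  {grV : ℤ → Submodule K V}

/-- A coderivation of degree `m` of the coalgebra `C = F(Σ⁻¹V)`:
`Δ ∘ d = (d ⊗ I + I ⊗ d) ∘ Δ`, where `I ⊗ d` carries the Koszul sign
(implemented by the parity operator `par m`). -/
def CofreeData.IsCoderivation (F : CofreeData K V grV) (m : ℤ) (dmap : F.C →ₗ[K] F.C) :
    Prop :=
  (∀ i : ℤ, ∀ x ∈ F.grC i, dmap x ∈ F.grC (i+m)) ∧
  F.comul ∘ₗ dmap
    = (TensorProduct.map dmap LinearMap.id + TensorProduct.map (F.par m) dmap) ∘ₗ F.comul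

/-- A morphism of the cofree coalgebras `F(Σ⁻¹V) → F(Σ⁻¹V')` (degree-0 coalgebra
homomorphism): `Δ' ∘ Φ = (Φ ⊗ Φ) ∘ Δ`. -/
def CofreeData.IsMorphism {K : Type} [Field K]
    {V : Type} [AddCommGroup V] [Module K V] {grV : ℤ → Submodule K V}
    {V' : Type} [AddCommGroup V'] [Module K V'] {grV' : ℤ → Submodule K V'}
    (F : CofreeData K V grV) (F' : CofreeData K V' grV') (Φ : F.C →ₗ[K] F'.C) : Prop :=
  (∀ i : ℤ, ∀ x ∈ F.grC i, Φ x ∈ F'.grC i) ∧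
  F'.comul ∘ₗ Φ = (TensorProduct.map Φ Φ) ∘ₗ F.comul

/-- The structure maps `F_n : Sⁿ(Σ⁻¹V) → Σ⁻¹V'` of a coalgebra morphism. -/
def CofreeData.structMap {K : Type} [Field K]
    {V : Type} [AddCommGroup V] [Module K V] {grV : ℤ → Submodule K V}
    {V' : Type} [AddCommGroup V'] [Module K V'] {grV' : ℤ → Submodule K V'}
    (F : CofreeData K V grV) (F' : CofreeData K V' grV') (Φ : F.C →ₗ[K] F'.C)
    (n : ℕ) (v : Fin (n+1) → V) : V' :=
  F'.xi (Φ (F.word n v))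

/-- The coderivation `Q` encodes the DGLA structure `(d, [·,·])`, i.e. `Q₁ = d`,
`Q₂(h₁,h₂) = (−1)^{|h₁|}[h₁,h₂]` and `Q_n = 0` for `n > 2`. -/
def CofreeData.EncodesDGLA {K : Type} [Field K]
    {L : Type} [AddCommGroup L] [Module K L] {grL : ℤ → Submodule K L}
    (F : CofreeData K L grL) (dL : L →ₗ[K] L) (br : L →ₗ[K] L →ₗ[K] L)
    (Q : F.C →ₗ[K] F.C) : Prop :=
  F.IsCoderivation 1 Q ∧
  (∀ v : L, F.xi (Q (F.word 0 (fun _ => v))) = dL v) ∧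
  (∀ i : ℤ, ∀ v₁ ∈ grL i, ∀ v₂ : L,
    F.xi (Q (F.word 1 ![v₁, v₂])) = ((-1:K)^i) • br v₁ v₂) ∧
  (∀ (n : ℕ) (v : Fin (n+3) → L), F.xi (Q (F.word (n+2) v)) = 0)

theorem Equiv.Perm.prod_lt_comp_of_symm {n : ℕ} {M : Type*} [CommMonoid M] (σ : Equiv.Perm (Fin n))
    (g : Fin n → Fin n → M) (hg : ∀ a b, g a b = g b a) :
    ∏ p ∈ Finset.univ.filter (fun p : Fin n × Fin n => p.1 < p.2), g (σ p.1) (σ p.2)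
      = ∏ p ∈ Finset.univ.filter (fun p : Fin n × Fin n => p.1 < p.2), g p.1 p.2 := by
  refine Finset.prod_bij'
    (i := fun p _ => if σ p.1 < σ p.2 then (σ p.1, σ p.2) else (σ p.2, σ p.1))
    (j := fun p _ => if σ.symm p.1 < σ.symm p.2 then (σ.symm p.1, σ.symm p.2)
      else (σ.symm p.2, σ.symm p.1)) ?_ ?_ ?_ ?_ ?_
  · rintro ⟨a, b⟩ h
    have hne : σ a ≠ σ b := fun e => by simp [σ.injective e] at h
    simp only [Finset.mem_filter, Finset.mem_univ, true_and] at h ⊢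
    split_ifs with h'
    · exact h'
    · exact lt_of_le_of_ne (not_lt.mp h') hne.symm
  · rintro ⟨a, b⟩ h
    have hne : σ.symm a ≠ σ.symm b := fun e => by simp [σ.symm.injective e] at h
    simp only [Finset.mem_filter, Finset.mem_univ, true_and] at h ⊢
    split_ifs with h'
    · exact h'
    · exact lt_of_le_of_ne (not_lt.mp h') hne.symm
  · rintro ⟨a, b⟩ h
    simp only [Finset.mem_filter, Finset.mem_univ, true_and] at h
    by_cases h' : σ a < σ b <;> simp [h', h, not_lt.mpr h.le]
  · rintro ⟨a, b⟩ h
    simp only [Finset.mem_filter, Finset.mem_univ, true_and] at h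
    by_cases h' : σ.symm a < σ.symm b <;> simp [h', h, not_lt.mpr h.le]
  · rintro ⟨a, b⟩ h
    by_cases h' : σ a < σ b
    · simp [h']
    · simp [h', hg (σ a)]

section koszulSign
variable {n : ℕ} (d : Fin n → ℤ)

theorem neg_one_zpow_mul_self (m : ℤ) : (-1 : K) ^ m * (-1 : K) ^ m = 1 := by
  rw [← mul_zpow]; simp

theorem koszulSign_mul_self (θ : Equiv.Perm (Fin n)) :
    koszulSign K d θ * koszulSign K d θ = 1 := by
  rw [koszulSign, ← Finset.prod_mul_distrib]
  exact Finset.prod_eq_one fun p _ => neg_one_zpow_mul_self _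

theorem koszulSign_eq_prod_lt (θ : Equiv.Perm (Fin n)) :
    koszulSign K d θ = ∏ p ∈ Finset.univ.filter (fun p : Fin n × Fin n => p.1 < p.2),
      if θ p.2 < θ p.1 then (-1 : K) ^ (d (θ p.1) * d (θ p.2)) else 1 := by
  rw [koszulSign, ← Finset.prod_filter, Finset.filter_filter]

theorem koszulSign_mul (θ σ : Equiv.Perm (Fin n)) :
    koszulSign K d (θ * σ) = koszulSign K d θ * koszulSign K (fun i => d (θ i)) σ := by
  have h := σ.prod_lt_comp_of_symm (M := K)
    (fun a b => if (a < b ∧ θ b < θ a) ∨ (b < a ∧ θ a < θ b) then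
      (-1 : K) ^ (d (θ a) * d (θ b)) else 1)
    (fun a b => by simp only [mul_comm (d (θ a)), or_comm])
  have h2 : koszulSign K d θ = ∏ p ∈ Finset.univ.filter (fun p : Fin n × Fin n => p.1 < p.2),
      if (p.1 < p.2 ∧ θ p.2 < θ p.1) ∨ (p.2 < p.1 ∧ θ p.1 < θ p.2) then
        (-1 : K) ^ (d (θ p.1) * d (θ p.2)) else 1 := by
    rw [koszulSign_eq_prod_lt]
    refine Finset.prod_congr rfl fun p hp => ?_
    have hp : p.1 < p.2 := by simpa using hp
    simp [hp, not_lt.mpr hp.le]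
  rw [h2, ← h, koszulSign_eq_prod_lt, koszulSign_eq_prod_lt, ← Finset.prod_mul_distrib]
  refine Finset.prod_congr rfl fun p hp => ?_
  have hp : p.1 < p.2 := by simpa using hp
  have h1 : σ p.1 ≠ σ p.2 := fun e => hp.ne (σ.injective e)
  have h3 : θ (σ p.1) ≠ θ (σ p.2) := fun e => h1 (θ.injective e)
  have hsq := neg_one_zpow_mul_self (K := K) (d (θ (σ p.1)) * d (θ (σ p.2)))
  simp only [Equiv.Perm.mul_apply]
  rcases lt_or_gt_of_ne h1 with h1 | h1 <;> rcases lt_or_gt_of_ne h3 with h3 | h3 <;>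
    simp [h1, h3, not_lt.mpr h1.le, not_lt.mpr h3.le, hsq]

theorem koszulSign_of_shift {a c : ℕ} (e : Fin a → Fin n) (he : ∀ i, (e i : ℕ) = c + i)
    (β : Equiv.Perm (Fin a)) (β' : Equiv.Perm (Fin n)) (h1 : ∀ i, β' (e i) = e (β i))
    (h2 : ∀ x, x ∉ Set.range e → β' x = x) :
    koszulSign K d β' = koszulSign K (fun i => d (e i)) β := by
  have emono : ∀ i j, e i < e j ↔ i < j := fun i j => by
    rw [Fin.lt_def, Fin.lt_def, he, he]; omega
  have einj : Function.Injective e := fun i j h => Fin.ext (by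
    have := he i; rw [h, he] at this; omega)
  have hr : ∀ x : Fin n, x ∈ Set.range e ↔ c ≤ x ∧ (x : ℕ) < c + a := fun x => by
    constructor
    · rintro ⟨i, rfl⟩; rw [he]; omega
    · rintro ⟨h, h'⟩
      exact ⟨⟨x - c, by omega⟩, Fin.ext (by rw [he]; simp; omega)⟩
  symm
  rw [koszulSign, koszulSign]
  refine Finset.prod_bij (fun p _ => (e p.1, e p.2)) ?_ ?_ ?_ ?_
  · rintro ⟨i, j⟩ h
    simpa [h1, emono] using h
  · rintro ⟨i, j⟩ _ ⟨i', j'⟩ _ h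
    simp only [Prod.mk.injEq] at h
    rw [einj h.1, einj h.2]
  · rintro ⟨x, y⟩ h
    simp only [Finset.mem_filter, Finset.mem_univ, true_and] at h
    obtain ⟨hxy, hβ⟩ := h
    have key : ∀ z, z ∈ Set.range e → β' z ∈ Set.range e := by
      rintro _ ⟨i, rfl⟩; exact ⟨β i, (h1 i).symm⟩
    rw [Fin.lt_def] at hxy hβ
    by_cases hx : x ∈ Set.range e <;> by_cases hy : y ∈ Set.range e
    · obtain ⟨i, rfl⟩ := hx
      obtain ⟨j, rfl⟩ := hy
      refine ⟨(i, j), ?_, rfl⟩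
      simp only [h1, ← Fin.lt_def, emono] at hxy hβ
      simp [hxy, hβ]
    · have := key x hx
      rw [h2 y hy] at hβ
      rw [hr] at hx hy this; omega
    · have := key y hy
      rw [h2 x hx] at hβ
      rw [hr] at hx hy this; omega
    · rw [h2 x hx, h2 y hy] at hβ; omega
  · rintro ⟨i, j⟩ _
    simp [h1]

theorem neg_one_zpow_sum {ι : Type*} (s : Finset ι) (g : ι → ℤ) :
    (-1 : K) ^ (∑ i ∈ s, g i) = ∏ i ∈ s, (-1 : K) ^ g i := by
  classical
  induction s using Finset.induction_on with
  | empty => simp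
  | insert a s ha ih => rw [Finset.sum_insert ha, Finset.prod_insert ha, zpow_add₀ (by simp), ih]

theorem koszulSign_cycleRange {n : ℕ} (d : Fin (n + 1) → ℤ) (j : Fin (n + 1)) :
    koszulSign K d (Fin.cycleRange j)
      = (-1 : K) ^ (d 0 * ∑ i ∈ Finset.univ.filter (· < j), d (Fin.cycleRange j i)) := by
  rw [koszulSign, Finset.mul_sum, neg_one_zpow_sum]
  symm
  refine Finset.prod_bij (fun i _ => (i, j)) ?_ ?_ ?_ ?_
  · intro i h
    have h : i < j := by simpa using h
    simp only [Finset.mem_filter, Finset.mem_univ, true_and, Fin.cycleRange_self]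
    refine ⟨h, ?_⟩
    rw [Fin.lt_def, Fin.coe_cycleRange_of_lt h]; simp
  · intro i _ i' _ h; simpa using h
  · rintro ⟨x, y⟩ h
    simp only [Finset.mem_filter, Finset.mem_univ, true_and] at h
    obtain ⟨hxy, hc⟩ := h
    have hy : y = j := by
      by_contra hne
      rcases lt_or_gt_of_ne hne with h | h
      · rw [Fin.lt_def, Fin.coe_cycleRange_of_lt h, Fin.coe_cycleRange_of_lt (hxy.trans h)] at hc
        rw [Fin.lt_def] at hxy; omega
      · rw [Fin.cycleRange_of_gt h] at hc
        rcases lt_trichotomy x j with h' | h' | h'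
        · rw [Fin.lt_def, Fin.coe_cycleRange_of_lt h'] at hc
          rw [Fin.lt_def] at hxy; omega
        · subst h'; simp at hc
        · rw [Fin.cycleRange_of_gt h'] at hc
          exact absurd hxy (not_lt.mpr hc.le)
    subst hy
    exact ⟨x, by simpa using hxy, rfl⟩
  · intro i _
    simp [mul_comm]

end koszulSign

theorem Equiv.Perm.sum_fin_succ {n : ℕ} {M : Type*} [AddCommMonoid M]
    (c : Fin (n + 1) → Equiv.Perm (Fin (n + 1))) (hc : ∀ j, c j j = 0)
    (g : Equiv.Perm (Fin (n + 1)) → M) :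
    ∑ θ, g θ = ∑ j, ∑ σ, g (Equiv.Perm.decomposeFin.symm (0, σ) * c j) := by
  rw [← Fintype.sum_prod_type']
  symm
  refine Function.Bijective.sum_comp (g := g)
    (e := fun p : Fin (n + 1) × Equiv.Perm (Fin n) =>
      Equiv.Perm.decomposeFin.symm (0, p.2) * c p.1) ?_
  rw [Fintype.bijective_iff_injective_and_card]
  refine ⟨?_, by simp [Fintype.card_perm, Nat.factorial_succ]⟩
  rintro ⟨j, σ⟩ ⟨j', σ'⟩ h
  simp only at h
  have hj : j = j' := by
    have h1 := congrArg (fun θ => θ j) h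
    have h2 := congrArg (fun θ => θ j') h
    simp only [Equiv.Perm.mul_apply, hc, Equiv.Perm.decomposeFin_symm_apply_zero] at h1 h2
    have h3 : Equiv.Perm.decomposeFin.symm (0, σ') (c j' j)
        = Equiv.Perm.decomposeFin.symm (0, σ') (c j' j') := by
      rw [← h1, hc, Equiv.Perm.decomposeFin_symm_apply_zero]
    exact (c j').injective ((Equiv.injective _) h3)
  subst hj
  have := Equiv.Perm.decomposeFin.symm.injective (mul_right_cancel h)
  simp only [Prod.mk.injEq, true_and] at this
  rw [this]

section Internal
variable {ι M W : Type*} [DecidableEq ι] [AddCommGroup M] [Module K M] [AddCommGroup W] [Module K W]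
  {A : ι → Submodule K M}

theorem DirectSum.IsInternal.exists_linearMap (hA : DirectSum.IsInternal A) (g : ι → M →ₗ[K] W) :
    ∃ G : M →ₗ[K] W, ∀ i, ∀ x ∈ A i, G x = g i x := by
  let e := LinearEquiv.ofBijective (DirectSum.coeLinearMap A) hA
  refine ⟨(DirectSum.toModule K ι W fun i => g i ∘ₗ (A i).subtype) ∘ₗ e.symm.toLinearMap, ?_⟩
  intro i x hx
  have : e.symm x = DirectSum.lof K ι (fun i => A i) i ⟨x, hx⟩ := by
    rw [LinearEquiv.symm_apply_eq]
    exact (DirectSum.coeLinearMap_lof (A := A) i (⟨x, hx⟩ : A i)).symm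
  simp [this]

theorem DirectSum.IsInternal.linearMap_ext (hA : DirectSum.IsInternal A) {f g : M →ₗ[K] W}
    (h : ∀ i, ∀ x ∈ A i, f x = g x) : f = g := by
  have : LinearMap.eqLocus f g = ⊤ := by
    rw [eq_top_iff, ← hA.submodule_iSup_eq_top]
    exact iSup_le fun i x hx => h i x hx
  exact LinearMap.ext fun x => by
    have hx : x ∈ LinearMap.eqLocus f g := this ▸ Submodule.mem_top
    exact hx

theorem DirectSum.IsInternal.exists_component (hA : DirectSum.IsInternal A) (i : ι) :
    ∃ p : M →ₗ[K] M, (∀ x, p x ∈ A i) ∧ (∀ x ∈ A i, p x = x) ∧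
      ∀ j ≠ i, ∀ x ∈ A j, p x = 0 := by
  obtain ⟨p, hp⟩ := hA.exists_linearMap (W := M) (fun j => if j = i then LinearMap.id else 0)
  refine ⟨p, ?_, fun x hx => by simpa using hp i x hx, fun j hj x hx => by simpa [hj] using hp j x hx⟩
  have : (A i).comap p = ⊤ := by
    rw [eq_top_iff, ← hA.submodule_iSup_eq_top]
    refine iSup_le fun j x hx => ?_
    rw [Submodule.mem_comap, hp j x hx]
    split_ifs with h
    · subst h; simpa using hx
    · simp
  exact fun x => this.ge (Submodule.mem_top (x := x))

theorem DirectSum.IsInternal.eq_of_le (hA : DirectSum.IsInternal A) {B : ι → Submodule K M}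
    (hB : ∀ i, B i ≤ A i) (htop : ⨆ i, B i = ⊤) (i : ι) : A i = B i := by
  refine le_antisymm (fun x hx => ?_) (hB i)
  obtain ⟨p, -, hp, hp0⟩ := hA.exists_component i
  have key : ∀ y, p y ∈ B i := by
    have : (B i).comap p = ⊤ := by
      rw [eq_top_iff, ← htop]
      refine iSup_le fun j y hy => ?_
      rw [Submodule.mem_comap]
      by_cases h : j = i
      · subst h; rwa [hp y (hB j hy)]
      · rw [hp0 j h y (hB j hy)]; exact zero_mem _
    exact fun y => this.ge (Submodule.mem_top (x := y))
  rw [← hp x hx]; exact key x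

end Internal

theorem MultilinearMap.eq_of_homogeneous {n : ℕ} {W : Type*} [AddCommGroup W] [Module K W]
    (hV : ⨆ i, grV i = ⊤) {φ ψ : MultilinearMap K (fun _ : Fin n => V) W}
    (h : ∀ (d : Fin n → ℤ) (v : Fin n → V), (∀ i, v i ∈ grV (d i)) → φ v = ψ v) : φ = ψ := by
  induction n with
  | zero => exact MultilinearMap.ext fun v => h (fun i => i.elim0) v (fun i => i.elim0)
  | succ n ih =>
    have key : ∀ x, φ.curryLeft x = ψ.curryLeft x := by
      have : LinearMap.eqLocus φ.curryLeft ψ.curryLeft = ⊤ := by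
        rw [eq_top_iff, ← hV]
        refine iSup_le fun i x hx => ih fun d v hv => ?_
        exact h (Fin.cons i d) (Fin.cons x v) (fun j => by
          refine Fin.cases ?_ ?_ j
          · exact hx
          · intro j; simpa using hv j)
      exact fun x => this.ge (Submodule.mem_top (x := x))
    ext v
    have := congrArg (fun f => f (Fin.tail v)) (key (v 0))
    simpa using this

namespace CofreeData

variable (F : CofreeData K V grV)

/-- The inclusion of the cogenerators as words of length one. -/
def incl : V →ₗ[K] F.C :=
  (MultilinearMap.ofSubsingleton K V F.C (0 : Fin 1)).symm (F.word 0)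

theorem incl_apply (v : V) : F.incl v = F.word 0 (fun _ => v) := rfl

theorem word_zero (v : Fin 1 → V) : F.word 0 v = F.incl (v 0) := by
  rw [incl_apply]; congr 1; funext i; fin_cases i; rfl

@[simp] theorem xi_incl (v : V) : F.xi (F.incl v) = v := F.xi_word₀ v

@[simp] theorem comul_incl (v : V) : F.comul (F.incl v) = 0 := F.comul_word₀ v

theorem word_congr {a b : ℕ} (hab : a = b) (s : Fin (a + 1) → V) (t : Fin (b + 1) → V)
    (h : ∀ i (hi : i < a + 1) (hi' : i < b + 1), s ⟨i, hi⟩ = t ⟨i, hi'⟩) :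
    F.word a s = F.word b t := by
  subst hab
  congr 1
  funext i
  exact h i i.2 i.2

theorem wt_eq_span (n : ℕ) : F.wt n = Submodule.span K (Set.range (F.word n)) :=
  le_antisymm (F.word_span n) (Submodule.span_le.2 (by rintro _ ⟨v, rfl⟩; exact F.word_wt n v))

/-- The part of weight `n` and internal degree `i`, spanned by words of homogeneous elements. -/
def wgr (n : ℕ) (i : ℤ) : Submodule K F.C :=
  Submodule.span K {x | ∃ (d : Fin (n + 1) → ℤ) (v : Fin (n + 1) → V),
    (∀ j, v j ∈ grV (d j)) ∧ ∑ j, (d j - 1) = i ∧ F.word n v = x}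

variable {F}

theorem word_mem_wgr {n : ℕ} {d : Fin (n + 1) → ℤ} {v : Fin (n + 1) → V}
    (h : ∀ j, v j ∈ grV (d j)) : F.word n v ∈ F.wgr n (∑ j, (d j - 1)) :=
  Submodule.subset_span ⟨d, v, h, rfl, rfl⟩

theorem incl_mem_wgr {i : ℤ} {v : V} (h : v ∈ grV (i + 1)) : F.incl v ∈ F.wgr 0 i :=
  Submodule.subset_span ⟨fun _ => i + 1, fun _ => v, fun _ => h, by simp, rfl⟩

theorem wgr_le_grC (n : ℕ) (i : ℤ) : F.wgr n i ≤ F.grC i :=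
  Submodule.span_le.2 (by rintro _ ⟨d, v, h, rfl, rfl⟩; exact F.word_grC n d v h)

theorem wgr_le_wt (n : ℕ) (i : ℤ) : F.wgr n i ≤ F.wt n :=
  Submodule.span_le.2 (by rintro _ ⟨d, v, h, rfl, rfl⟩; exact F.word_wt n v)

theorem wt_eq_iSup (hV : ⨆ i, grV i = ⊤) (n : ℕ) : F.wt n = ⨆ i, F.wgr n i := by
  refine le_antisymm ?_ (iSup_le fun i => wgr_le_wt n i)
  rw [wt_eq_span, Submodule.span_le]
  rintro _ ⟨v, rfl⟩
  have : (Submodule.mkQ (⨆ i, F.wgr n i)).compMultilinearMap (F.word n) = 0 := by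
    refine MultilinearMap.eq_of_homogeneous hV fun d v hv => ?_
    simp only [LinearMap.compMultilinearMap_apply, zero_apply]
    rw [Submodule.mkQ_apply, Submodule.Quotient.mk_eq_zero]
    exact le_iSup (F.wgr n) _ (word_mem_wgr hv)
  have := congrArg (fun f => f v) this
  simpa using this

theorem iSup_wgr (hV : ⨆ i, grV i = ⊤) : ⨆ n, ⨆ i, F.wgr n i = ⊤ := by
  rw [← F.wt_internal.submodule_iSup_eq_top]
  exact iSup_congr fun n => (wt_eq_iSup hV n).symm

theorem grC_eq_iSup (hV : ⨆ i, grV i = ⊤) (i : ℤ) : F.grC i = ⨆ n, F.wgr n i :=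
  F.grC_internal.eq_of_le (fun i => iSup_le fun n => wgr_le_grC n i)
    (by rw [iSup_comm]; exact iSup_wgr hV) i

section
variable {W : Type*} [AddCommGroup W] [Module K W]

theorem eq_on_wt (hV : ⨆ i, grV i = ⊤) {f g : F.C →ₗ[K] W} {n : ℕ}
    (h : ∀ i, ∀ x ∈ F.wgr n i, f x = g x) : ∀ x ∈ F.wt n, f x = g x := by
  intro x hx
  rw [wt_eq_iSup hV] at hx
  exact (iSup_le fun i x hx => h i x hx : _ ≤ LinearMap.eqLocus f g) hx

theorem map_ext (hV : ⨆ i, grV i = ⊤) {f g : F.C →ₗ[K] W}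
    (h : ∀ n i, ∀ x ∈ F.wgr n i, f x = g x) : f = g :=
  F.wt_internal.linearMap_ext fun n => eq_on_wt hV (h n)

theorem map_grC (hV : ⨆ i, grV i = ⊤) {f : F.C →ₗ[K] W} {i : ℤ} {S : Submodule K W}
    (h : ∀ n, ∀ x ∈ F.wgr n i, f x ∈ S) : ∀ x ∈ F.grC i, f x ∈ S := by
  intro x hx
  rw [grC_eq_iSup hV] at hx
  exact (iSup_le fun n x hx => h n x hx : _ ≤ S.comap f) hx

end

theorem xi_wt_succ {n : ℕ} {x : F.C} (hx : x ∈ F.wt (n + 1)) : F.xi x = 0 := by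
  rw [wt_eq_span] at hx
  refine (Submodule.span_le.2 ?_ : _ ≤ LinearMap.ker F.xi) hx
  rintro _ ⟨v, rfl⟩
  exact F.xi_word n v

theorem incl_xi {x : F.C} (hx : x ∈ F.wt 0) : F.incl (F.xi x) = x := by
  rw [wt_eq_span] at hx
  refine (Submodule.span_le.2 ?_ : _ ≤ LinearMap.eqLocus (F.incl ∘ₗ F.xi) LinearMap.id) hx
  rintro _ ⟨v, rfl⟩
  simp [word_zero]

theorem xi_grC (hV : ⨆ i, grV i = ⊤) {i : ℤ} : ∀ x ∈ F.grC i, F.xi x ∈ grV (i + 1) := by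
  refine map_grC hV fun n x hx => ?_
  cases n with
  | succ n => rw [xi_wt_succ (wgr_le_wt _ _ hx)]; exact zero_mem _
  | zero =>
    refine (Submodule.span_le.2 ?_ : F.wgr 0 i ≤ (grV (i + 1)).comap F.xi) hx
    rintro _ ⟨d, v, h, rfl, rfl⟩
    simpa [word_zero] using h 0

theorem incl_grC {i : ℤ} {v : V} (h : v ∈ grV (i + 1)) : F.incl v ∈ F.grC i :=
  wgr_le_grC _ _ (incl_mem_wgr h)

theorem par_incl {i e : ℤ} {v : V} (h : v ∈ grV (i + 1)) :
    F.par e (F.incl v) = ((-1 : K) ^ (e * i)) • F.incl v :=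
  F.par_apply e i _ (incl_grC h)

theorem exists_mul (hV : ⨆ i, grV i = ⊤) (F : CofreeData K V grV) :
    ∃ m : V →ₗ[K] F.C →ₗ[K] F.C, ∀ v n (w : Fin (n + 1) → V),
      m v (F.word n w) = F.word (n + 1) (Fin.cons v w) := by
  have hn : ∀ n, ∃ g : F.C →ₗ[K] (V →ₗ[K] F.C), ∀ (w : Fin (n + 1) → V) v,
      g (F.word n w) v = F.word (n + 1) (Fin.cons v w) := by
    intro n
    let φ : MultilinearMap K (fun _ : Fin (n + 1) => V) (V →ₗ[K] F.C) :=
      { toFun := fun w =>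
          { toFun := fun v => F.word (n + 1) (Fin.cons v w)
            map_add' := fun a b => (F.word (n + 1)).cons_add w a b
            map_smul' := fun c a => (F.word (n + 1)).cons_smul w c a }
        map_update_add' := fun {inst} w i a b => by
          obtain rfl : inst = instDecidableEqFin _ := Subsingleton.elim _ _
          ext v
          simp [Fin.cons_update]
        map_update_smul' := fun {inst} w i c a => by
          obtain rfl : inst = instDecidableEqFin _ := Subsingleton.elim _ _
          ext v
          simp [Fin.cons_update] }
    obtain ⟨g, hg⟩ := F.word_factor n _ inferInstance inferInstance φ (by
      intro d w hw θ
      have : LinearMap.eqLocus (φ fun i => w (θ i)) (koszulSign K (fun i => d i - 1) θ • φ w) = ⊤ := by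
        rw [eq_top_iff, ← hV]
        refine iSup_le fun i v hv => ?_
        have h := F.word_symm (n + 1) (Fin.cons i d) (Fin.cons v w)
          (fun j => by
            refine Fin.cases ?_ ?_ j
            · exact hv
            · intro j; simpa using hw j) (Equiv.Perm.decomposeFin.symm (0, θ))
        rw [koszulSign_of_shift (c := 1) _ Fin.succ (fun i => by simp [add_comm]) θ] at h
        · have e : (fun j => (Fin.cons v w : Fin (n + 2) → V) (Equiv.Perm.decomposeFin.symm (0, θ) j))
              = Fin.cons v (fun i => w (θ i)) := by
            funext j
            refine Fin.cases ?_ ?_ j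
            · simp
            · intro j; simp
          rw [e] at h
          simpa [φ] using h
        · intro i; simp
        · intro x hx
          rcases Fin.eq_zero_or_eq_succ x with rfl | ⟨j, rfl⟩
          · simp
          · exact absurd ⟨j, rfl⟩ hx
      exact LinearMap.ext fun x => this.ge (Submodule.mem_top (x := x)))
    exact ⟨g, fun w v => by rw [hg]; rfl⟩
  choose g hg using hn
  obtain ⟨G, hG⟩ := F.wt_internal.exists_linearMap g
  exact ⟨G.flip, fun v n w => by rw [LinearMap.flip_apply, hG n _ (F.word_wt n w), hg]⟩

/-- Left multiplication of words by cogenerators. -/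
def mul (F : CofreeData K V grV) (hV : ⨆ i, grV i = ⊤) : V →ₗ[K] F.C →ₗ[K] F.C :=
  (exists_mul hV F).choose

theorem mul_word (hV : ⨆ i, grV i = ⊤) (v : V) (n : ℕ) (w : Fin (n + 1) → V) :
    F.mul hV v (F.word n w) = F.word (n + 1) (Fin.cons v w) :=
  (exists_mul hV F).choose_spec v n w

theorem mul_mem_wgr (hV : ⨆ i, grV i = ⊤) {n : ℕ} {i j : ℤ} {v : V} {x : F.C}
    (hv : v ∈ grV (i + 1)) (hx : x ∈ F.wgr n j) : F.mul hV v x ∈ F.wgr (n + 1) (i + j) := by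
  refine (Submodule.span_le.2 ?_ : F.wgr n j ≤ (F.wgr (n + 1) (i + j)).comap (F.mul hV v)) hx
  rintro _ ⟨d, w, h, rfl, rfl⟩
  rw [SetLike.mem_coe, Submodule.mem_comap, mul_word]
  refine Submodule.subset_span ⟨Fin.cons (i + 1) d, Fin.cons v w, fun j => ?_, ?_, rfl⟩
  · refine Fin.cases ?_ ?_ j
    · exact hv
    · intro j; simpa using h j
  · rw [Fin.sum_univ_succ]; simp

theorem mul_grC (hV : ⨆ i, grV i = ⊤) {i j : ℤ} {v : V} (hv : v ∈ grV (i + 1)) :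
    ∀ x ∈ F.grC j, F.mul hV v x ∈ F.grC (i + j) :=
  map_grC hV fun _ _ hx => wgr_le_grC _ _ (mul_mem_wgr hV hv hx)

theorem xi_mul (hV : ⨆ i, grV i = ⊤) (v : V) (x : F.C) : F.xi (F.mul hV v x) = 0 := by
  suffices F.xi ∘ₗ F.mul hV v = 0 from LinearMap.congr_fun this x
  refine F.wt_internal.linearMap_ext fun n x hx => ?_
  rw [wt_eq_span] at hx
  refine (Submodule.span_le.2 ?_ : _ ≤ LinearMap.eqLocus (F.xi ∘ₗ F.mul hV v) 0) hx
  rintro _ ⟨w, rfl⟩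
  simp [mul_word, xi_word]

end CofreeData

namespace CofreeData

variable {F : CofreeData K V grV}

/-- The word `w` cut after its `k`-th letter. -/
def cut (F : CofreeData K V grV) (n : ℕ) (k : Fin (n + 1)) (w : Fin (n + 2) → V) : F.C ⊗[K] F.C :=
  (F.word (k : ℕ) (fun i : Fin ((k : ℕ) + 1) => w (Fin.castLE (by have := k.isLt; omega) i))) ⊗ₜ[K]
    (F.word (n - (k : ℕ)) (fun j : Fin (n - (k : ℕ) + 1) =>
      w (⟨(k : ℕ) + 1 + (j : ℕ), by have := k.isLt; have := j.isLt; omega⟩ : Fin (n + 2))))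

/-- The component of the deshuffle coproduct whose left factor has weight `k`. -/
def cutSum (F : CofreeData K V grV) (n : ℕ) (d : Fin (n + 2) → ℤ) (v : Fin (n + 2) → V)
    (k : Fin (n + 1)) : F.C ⊗[K] F.C :=
  ∑ θ : Equiv.Perm (Fin (n + 2)), koszulSign K (fun i => d i - 1) θ • F.cut n k (fun i => v (θ i))

theorem comul_word_eq_sum {n : ℕ} {d : Fin (n + 2) → ℤ} {v : Fin (n + 2) → V}
    (hv : ∀ i, v i ∈ grV (d i)) :
    F.comul (F.word (n + 1) v) = ∑ k : Fin (n + 1),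
      ((((n + 1 - (k : ℕ)).factorial * ((k : ℕ) + 1).factorial : ℕ) : K))⁻¹ • F.cutSum n d v k := by
  rw [F.comul_word n d v hv]
  refine Finset.sum_congr rfl fun k _ => ?_
  rw [cutSum, Finset.smul_sum]
  refine Finset.sum_congr rfl fun θ _ => ?_
  rw [smul_smul, mul_comm]
  rfl

theorem cut_swap_left {n : ℕ} {d : Fin (n + 2) → ℤ} {w : Fin (n + 2) → V}
    (hw : ∀ i, w i ∈ grV (d i)) (k : Fin (n + 1)) (j : Fin (n + 2)) (hj : (j : ℕ) ≤ k) :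
    F.cut n k (fun i => w (Equiv.swap 0 j i))
      = koszulSign K (fun i => d i - 1) (Equiv.swap 0 j) • F.cut n k w := by
  have hk := k.isLt
  let e : Fin ((k : ℕ) + 1) → Fin (n + 2) := Fin.castLE (by omega)
  have he : Function.Injective e := Fin.castLE_injective _
  have hs : ∀ i, Equiv.swap 0 j (e i) = e (Equiv.swap 0 ⟨j, by omega⟩ i) := fun i => by
    rw [he.map_swap]; rfl
  rw [koszulSign_of_shift (c := 0) _ e (fun i => by simp [e]) (Equiv.swap 0 ⟨j, by omega⟩) _ hs,
    cut, cut, TensorProduct.smul_tmul', ← F.word_symm _ _ _ (fun i => hw (e i))]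
  · congr 2
    · funext i
      exact congrArg w (hs i)
    · funext i
      congr 1
      refine Equiv.swap_apply_of_ne_of_ne ?_ ?_ <;> intro h <;> rw [Fin.ext_iff] at h
      · simp at h
      · simp at h; omega
  · intro x hx
    refine Equiv.swap_apply_of_ne_of_ne ?_ ?_
    · rintro rfl; exact hx ⟨0, by simp [e]⟩
    · rintro rfl; exact hx ⟨⟨x, by omega⟩, by simp [e]⟩

theorem cut_swap_right {n : ℕ} {d : Fin (n + 2) → ℤ} {w : Fin (n + 2) → V}
    (hw : ∀ i, w i ∈ grV (d i)) (k : Fin (n + 1)) (j : Fin (n + 2)) (hj : (k : ℕ) < j) :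
    F.cut n k (fun i => w (Equiv.swap k.succ j i))
      = koszulSign K (fun i => d i - 1) (Equiv.swap k.succ j) • F.cut n k w := by
  have hk := k.isLt
  let e : Fin (n - (k : ℕ) + 1) → Fin (n + 2) := fun i => ⟨k + 1 + i, by omega⟩
  have he : Function.Injective e := fun a b h => by
    simp only [e, Fin.mk.injEq] at h; exact Fin.ext (by omega)
  have hs : ∀ i, Equiv.swap k.succ j (e i) = e (Equiv.swap 0 ⟨j - (k + 1), by omega⟩ i) := fun i => by
    rw [he.map_swap]
    congr 2
    exact Fin.ext (by simp [e]; omega)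
  rw [koszulSign_of_shift (c := k + 1) _ e (fun i => by simp [e])
    (Equiv.swap 0 ⟨j - (k + 1), by omega⟩) _ hs,
    cut, cut, ← TensorProduct.tmul_smul]
  · rw [← F.word_symm _ _ _ (fun i => hw (e i))]
    congr 2
    · funext i
      congr 1
      refine Equiv.swap_apply_of_ne_of_ne ?_ ?_ <;> intro h <;> rw [Fin.ext_iff] at h
      · simp at h; omega
      · simp at h; omega
    · funext i
      exact congrArg w (hs i)
  · intro x hx
    refine Equiv.swap_apply_of_ne_of_ne ?_ ?_
    · rintro rfl; exact hx ⟨0, by simp [e, Fin.ext_iff]⟩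
    · rintro rfl; exact hx ⟨⟨x - (k + 1), by omega⟩, by simp [e, Fin.ext_iff]; omega⟩

theorem cutSum_cons {n : ℕ} {a : ℤ} {d : Fin (n + 1) → ℤ} {u : V} {v : Fin (n + 1) → V}
    (hu : u ∈ grV a) (hv : ∀ i, v i ∈ grV (d i)) (k : Fin (n + 1)) :
    F.cutSum n (Fin.cons a d) (Fin.cons u v) k
      = (((k : ℕ) + 1 : ℕ) : K) • ∑ σ : Equiv.Perm (Fin (n + 1)), koszulSign K (fun i => d i - 1) σ •
          F.cut n k (Fin.cons u fun i => v (σ i))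
        + ((n + 1 - k : ℕ) : K) • ∑ σ : Equiv.Perm (Fin (n + 1)), koszulSign K (fun i => d i - 1) σ •
          (-1 : K) ^ ((a - 1) * ∑ i ∈ Finset.univ.filter (fun i : Fin (n + 1) => i ≤ k),
            (d (σ i) - 1)) • F.cut n k (k.succ.insertNth u fun i => v (σ i)) := by
  have hk := k.isLt
  let D : Fin (n + 2) → ℤ := fun i => (Fin.cons a d : Fin (n + 2) → ℤ) i - 1
  let U : Fin (n + 2) → V := Fin.cons u v
  have hU : ∀ i, U i ∈ grV (D i + 1) := fun i => by
    refine Fin.cases ?_ ?_ i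
    · simpa [D, U] using hu
    · intro j; simpa [D, U] using hv j
  let g : Equiv.Perm (Fin (n + 2)) → F.C ⊗[K] F.C := fun θ =>
    koszulSign K D θ • F.cut n k (fun i => U (θ i))
  have gl : ∀ θ (j : Fin (n + 2)), (j : ℕ) ≤ k → g (θ * Equiv.swap 0 j) = g θ := fun θ j hj => by
    simp only [g, Equiv.Perm.mul_apply]
    rw [cut_swap_left (w := fun i => U (θ i)) (fun i => hU (θ i)) k j hj, koszulSign_mul, smul_smul]
    simp only [add_sub_cancel_right]
    rw [mul_assoc, koszulSign_mul_self, mul_one]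
  have gr : ∀ θ (j : Fin (n + 2)), (k : ℕ) < j → g (θ * Equiv.swap k.succ j) = g θ := fun θ j hj => by
    simp only [g, Equiv.Perm.mul_apply]
    rw [cut_swap_right (w := fun i => U (θ i)) (fun i => hU (θ i)) k j hj, koszulSign_mul, smul_smul]
    simp only [add_sub_cancel_right]
    rw [mul_assoc, koszulSign_mul_self, mul_one]
  let c : Fin (n + 2) → Equiv.Perm (Fin (n + 2)) := fun j =>
    if (j : ℕ) ≤ k then Equiv.swap 0 j else Fin.cycleRange k.succ * Equiv.swap k.succ j
  have hc : ∀ j, c j j = 0 := fun j => by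
    by_cases h : (j : ℕ) ≤ k <;> simp [c, h]
  have e0 : ∀ σ : Equiv.Perm (Fin (n + 1)), (fun i => U (Equiv.Perm.decomposeFin.symm (0, σ) i))
      = Fin.cons u fun i => v (σ i) := fun σ => by
    funext i
    refine Fin.cases ?_ ?_ i
    · simp [U]
    · intro i; simp [U]
  have d0 : ∀ σ : Equiv.Perm (Fin (n + 1)), (fun i => D (Equiv.Perm.decomposeFin.symm (0, σ) i))
      = Fin.cons (a - 1) fun i => d (σ i) - 1 := fun σ => by
    funext i
    refine Fin.cases ?_ ?_ i
    · simp [D]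
    · intro i; simp [D]
  have s0 : ∀ σ : Equiv.Perm (Fin (n + 1)), koszulSign K D (Equiv.Perm.decomposeFin.symm (0, σ))
      = koszulSign K (fun i => d i - 1) σ := fun σ => by
    rw [koszulSign_of_shift (c := 1) D Fin.succ (fun i => by simp [add_comm]) σ]
    · simp [D]
    · intro i; simp
    · intro x hx
      rcases Fin.eq_zero_or_eq_succ x with rfl | ⟨j, rfl⟩
      · simp
      · exact absurd ⟨j, rfl⟩ hx
  have g1 : ∀ σ : Equiv.Perm (Fin (n + 1)), g (Equiv.Perm.decomposeFin.symm (0, σ))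
      = koszulSign K (fun i => d i - 1) σ • F.cut n k (Fin.cons u fun i => v (σ i)) := fun σ => by
    simp only [g, e0, s0]
  have g2 : ∀ σ : Equiv.Perm (Fin (n + 1)),
      g (Equiv.Perm.decomposeFin.symm (0, σ) * Fin.cycleRange k.succ)
      = koszulSign K (fun i => d i - 1) σ •
          (-1 : K) ^ ((a - 1) * ∑ i ∈ Finset.univ.filter (fun i : Fin (n + 1) => i ≤ k),
            (d (σ i) - 1)) • F.cut n k (k.succ.insertNth u fun i => v (σ i)) := fun σ => by
    simp only [g, koszulSign_mul, s0, d0, mul_smul]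
    congr 2
    · rw [koszulSign_cycleRange, Fin.cons_zero]
      congr 2
      symm
      refine Finset.sum_bij (fun i _ => i.castSucc) ?_ ?_ ?_ ?_
      · intro i hi
        simp only [Finset.mem_filter, Finset.mem_univ, true_and] at hi ⊢
        rw [Fin.lt_def]; rw [Fin.le_def] at hi; simp; omega
      · intro i _ j _ h; simpa using h
      · intro x hx
        simp only [Finset.mem_filter, Finset.mem_univ, true_and, Fin.lt_def, Fin.val_succ] at hx
        refine ⟨⟨x, by omega⟩, Finset.mem_filter.2 ⟨Finset.mem_univ _, ?_⟩, by simp⟩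
        exact Nat.lt_succ_iff.1 hx
      · intro i hi
        have hi : i ≤ k := by simpa using hi
        have : Fin.cycleRange k.succ i.castSucc = i.succ := Fin.ext (by
          rw [Fin.coe_cycleRange_of_lt]
          · simp
          · rw [Fin.lt_def]; rw [Fin.le_def] at hi; simp; omega)
        rw [this, Fin.cons_succ]
    · congr 1
      have := Fin.cons_comp_cycleRange u (fun i => v (σ i)) k.succ
      rw [← this, ← e0]
      rfl
  have hsum : F.cutSum n (Fin.cons a d) (Fin.cons u v) k = ∑ θ, g θ := rfl
  rw [hsum, Equiv.Perm.sum_fin_succ c hc]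
  have hgc : ∀ j, (∑ σ, g (Equiv.Perm.decomposeFin.symm (0, σ) * c j))
      = if (j : ℕ) ≤ k then ∑ σ, g (Equiv.Perm.decomposeFin.symm (0, σ)) else
        ∑ σ, g (Equiv.Perm.decomposeFin.symm (0, σ) * Fin.cycleRange k.succ) := fun j => by
    split_ifs with h
    · refine Finset.sum_congr rfl fun σ _ => ?_
      simp only [c, h, if_true]
      exact gl _ _ h
    · refine Finset.sum_congr rfl fun σ _ => ?_
      simp only [c, h, if_false]
      rw [← mul_assoc]
      exact gr _ _ (by omega)
  simp only [hgc]
  rw [Finset.sum_ite, Finset.sum_const, Finset.sum_const, ← Nat.cast_smul_eq_nsmul K,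
    ← Nat.cast_smul_eq_nsmul K]
  have c1 : (Finset.univ.filter (fun j : Fin (n + 2) => (j : ℕ) ≤ k)).card = k + 1 := by
    have : Finset.univ.filter (fun j : Fin (n + 2) => (j : ℕ) ≤ k)
        = Finset.Iic (⟨k, by omega⟩ : Fin (n + 2)) := by
      ext; simp [Fin.le_def]
    rw [this, Fin.card_Iic]
  have c2 : (Finset.univ.filter (fun j : Fin (n + 2) => ¬ (j : ℕ) ≤ k)).card = n + 1 - k := by
    have := Finset.card_filter_add_card_filter_not (s := (Finset.univ : Finset (Fin (n + 2))))
      (fun j => (j : ℕ) ≤ k)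
    rw [c1] at this
    simp at this
    simp; omega
  rw [c1, c2]
  simp only [g1, g2]

end CofreeData

namespace CofreeData

variable {F : CofreeData K V grV}

theorem cut_cons_zero {n : ℕ} (u : V) (w : Fin (n + 1) → V) :
    F.cut n 0 (Fin.cons u w) = F.incl u ⊗ₜ[K] F.word n w := by
  rw [cut, incl_apply]
  congr 1
  · refine F.word_congr (by simp) _ _ fun i hi hi' => ?_
    obtain rfl : i = 0 := by omega
    rfl
  · refine F.word_congr (by simp) _ _ fun i hi hi' => ?_
    have : (⟨((0 : Fin (n + 1)) : ℕ) + 1 + i, by simp; omega⟩ : Fin (n + 2)) = Fin.succ ⟨i, hi'⟩ :=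
      Fin.ext (by simp [add_comm])
    rw [this, Fin.cons_succ]

theorem cut_cons_succ (hV : ⨆ i, grV i = ⊤) {n : ℕ} (k : Fin (n + 1)) (u : V)
    (w : Fin (n + 2) → V) :
    F.cut (n + 1) k.succ (Fin.cons u w)
      = TensorProduct.map (F.mul hV u) LinearMap.id (F.cut n k w) := by
  rw [cut, cut, TensorProduct.map_tmul, mul_word]
  have hk := k.isLt
  congr 1
  · refine F.word_congr (by simp) _ _ fun i hi hi' => ?_
    cases i with
    | zero => rfl
    | succ i => rfl
  · rw [LinearMap.id_apply]
    refine F.word_congr (by simp) _ _ fun i hi hi' => ?_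
    simp only [Fin.val_succ] at hi
    have : (⟨(k.succ : ℕ) + 1 + i, by simp; omega⟩ : Fin (n + 3))
        = Fin.succ ⟨k + 1 + i, by omega⟩ :=
      Fin.ext (by simp; omega)
    simp only [this, Fin.cons_succ]

theorem insertNth_of_lt {n : ℕ} {α : Type*} (p : Fin (n + 1)) (u : α) (w : Fin n → α)
    (i : ℕ) (hi : i < n + 1) (hp : i < p) :
    (p.insertNth u w : Fin (n + 1) → α) ⟨i, hi⟩ = w ⟨i, by omega⟩ := by
  rw [Fin.insertNth_apply_below (show (⟨i, hi⟩ : Fin (n + 1)) < p from hp)]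
  exact eq_rec_constant _ _

theorem insertNth_of_gt {n : ℕ} {α : Type*} (p : Fin (n + 1)) (u : α) (w : Fin n → α)
    (i : ℕ) (hi : i < n + 1) (hp : (p : ℕ) < i) :
    (p.insertNth u w : Fin (n + 1) → α) ⟨i, hi⟩ = w ⟨i - 1, by omega⟩ := by
  rw [Fin.insertNth_apply_above (show p < (⟨i, hi⟩ : Fin (n + 1)) from hp)]
  exact eq_rec_constant _ _

theorem insertNth_of_eq {n : ℕ} {α : Type*} (p : Fin (n + 1)) (u : α) (w : Fin n → α)
    (i : ℕ) (hi : i < n + 1) (hp : i = p) :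
    (p.insertNth u w : Fin (n + 1) → α) ⟨i, hi⟩ = u := by
  subst hp
  exact Fin.insertNth_apply_same (α := fun _ => α) p u w

theorem cut_insertNth_last {n : ℕ} (u : V) (w : Fin (n + 1) → V) :
    F.cut n (Fin.last n) ((Fin.last n).succ.insertNth u w) = F.word n w ⊗ₜ[K] F.incl u := by
  rw [cut, incl_apply]
  congr 1
  · refine F.word_congr (by simp) _ _ fun i hi hi' => ?_
    exact insertNth_of_lt _ _ _ _ _ (by simpa using hi')
  · refine F.word_congr (by simp) _ _ fun i hi hi' => ?_
    exact insertNth_of_eq _ _ _ _ _ (by simp; omega)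

theorem cut_insertNth_castSucc (hV : ⨆ i, grV i = ⊤) {n : ℕ} (k : Fin (n + 1)) (u : V)
    (w : Fin (n + 2) → V) :
    F.cut (n + 1) k.castSucc (k.castSucc.succ.insertNth u w)
      = TensorProduct.map LinearMap.id (F.mul hV u) (F.cut n k w) := by
  rw [cut, cut, TensorProduct.map_tmul, mul_word]
  have hk := k.isLt
  congr 1
  · refine F.word_congr (by simp) _ _ fun i hi hi' => ?_
    exact insertNth_of_lt _ _ _ _ _ (by simpa using hi')
  · refine F.word_congr (by simp; omega) _ _ fun i hi hi' => ?_
    cases i with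
    | zero => exact insertNth_of_eq _ _ _ _ _ (by simp)
    | succ i =>
      refine (insertNth_of_gt _ _ _ _ _ (by simp)).trans ?_
      refine Eq.trans ?_ (Fin.cons_succ (α := fun _ => V) u _ ⟨i, by omega⟩).symm
      congr 1

theorem par_word {n : ℕ} {d : Fin (n + 1) → ℤ} {v : Fin (n + 1) → V} (e : ℤ)
    (hv : ∀ i, v i ∈ grV (d i)) :
    F.par e (F.word n v) = (-1 : K) ^ (e * ∑ i, (d i - 1)) • F.word n v :=
  F.par_apply _ _ _ (F.word_grC n d v hv)

theorem map_par_cut {n : ℕ} {d : Fin (n + 2) → ℤ} {w : Fin (n + 2) → V} (e : ℤ)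
    (hw : ∀ i, w i ∈ grV (d i)) (k : Fin (n + 1)) :
    TensorProduct.map (F.par e) LinearMap.id (F.cut n k w)
      = (-1 : K) ^ (e * ∑ i ∈ Finset.univ.filter (fun i : Fin (n + 2) => i ≤ k.castSucc),
            (d i - 1)) • F.cut n k w := by
  have hk := k.isLt
  rw [cut, TensorProduct.map_tmul, par_word e (fun i => hw _), ← TensorProduct.smul_tmul',
    LinearMap.id_apply]
  congr 3
  refine Finset.sum_bij (fun i _ => Fin.castLE (by omega) i) ?_ ?_ ?_ ?_
  · intro i _
    refine Finset.mem_filter.2 ⟨Finset.mem_univ _, ?_⟩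
    exact Nat.lt_succ_iff.1 i.2
  · intro i _ j _ h; simpa using h
  · intro x hx
    have hx := (Finset.mem_filter.1 hx).2
    exact ⟨⟨x, Nat.lt_succ_iff.2 hx⟩, Finset.mem_univ _, rfl⟩
  · intro i _; rfl

theorem sum_koszulSign_smul_word {n : ℕ} {d : Fin (n + 1) → ℤ} {v : Fin (n + 1) → V}
    (hv : ∀ i, v i ∈ grV (d i)) :
    ∑ σ : Equiv.Perm (Fin (n + 1)), koszulSign K (fun i => d i - 1) σ • F.word n (fun i => v (σ i))
      = ((n + 1).factorial : K) • F.word n v := by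
  have : ∀ σ : Equiv.Perm (Fin (n + 1)),
      koszulSign K (fun i => d i - 1) σ • F.word n (fun i => v (σ i)) = F.word n v := fun σ => by
    rw [F.word_symm n d v hv, smul_smul, koszulSign_mul_self, one_smul]
  simp only [this, Finset.sum_const, Finset.card_univ, Fintype.card_perm, Fintype.card_fin]
  rw [Nat.cast_smul_eq_nsmul]

variable [CharZero K]

theorem inv_factorial_mul_succ (a b : ℕ) :
    (((a.factorial * (b + 1).factorial : ℕ) : K))⁻¹ * ((b + 1 : ℕ) : K)
      = ((a.factorial * b.factorial : ℕ) : K)⁻¹ := by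
  have h1 : ((b + 1 : ℕ) : K) ≠ 0 := Nat.cast_ne_zero.2 (by omega)
  have h2 : (a.factorial : K) ≠ 0 := Nat.cast_ne_zero.2 a.factorial_ne_zero
  have h3 : (b.factorial : K) ≠ 0 := Nat.cast_ne_zero.2 b.factorial_ne_zero
  rw [Nat.factorial_succ]
  push_cast at h1 ⊢
  field_simp

theorem inv_succ_factorial_mul (a b : ℕ) :
    ((((a + 1).factorial * b.factorial : ℕ) : K))⁻¹ * ((a + 1 : ℕ) : K)
      = ((a.factorial * b.factorial : ℕ) : K)⁻¹ := by
  rw [mul_comm (a + 1).factorial, inv_factorial_mul_succ, mul_comm b.factorial]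

theorem comul_mul_word_left (hV : ⨆ i, grV i = ⊤) {n : ℕ} {d : Fin (n + 1) → ℤ}
    {v : Fin (n + 1) → V} (hv : ∀ i, v i ∈ grV (d i)) (u : V) :
    ∑ k : Fin (n + 1), (((n + 1 - (k : ℕ)).factorial * (k : ℕ).factorial : ℕ) : K)⁻¹ •
        ∑ σ : Equiv.Perm (Fin (n + 1)), koszulSign K (fun i => d i - 1) σ •
          F.cut n k (Fin.cons u fun i => v (σ i))
      = F.incl u ⊗ₜ[K] F.word n v
        + TensorProduct.map (F.mul hV u) LinearMap.id (F.comul (F.word n v)) := by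
  rw [Fin.sum_univ_succ]
  congr 1
  · simp only [cut_cons_zero, ← TensorProduct.tmul_smul]
    rw [← TensorProduct.tmul_sum, sum_koszulSign_smul_word hv, ← TensorProduct.tmul_smul, smul_smul]
    have h2 : ((n + 1).factorial : K) ≠ 0 := Nat.cast_ne_zero.2 (Nat.factorial_ne_zero _)
    simp [h2]
  · cases n with
    | zero => simp [word_zero]
    | succ n =>
      rw [comul_word_eq_sum hv, map_sum]
      refine Finset.sum_congr rfl fun k _ => ?_
      simp only [cut_cons_succ hV, ← map_smul]
      rw [← map_sum, ← map_smul]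
      congr 2
      simp

theorem comul_mul_word_right (hV : ⨆ i, grV i = ⊤) {n : ℕ} {d : Fin (n + 1) → ℤ}
    {v : Fin (n + 1) → V} (hv : ∀ i, v i ∈ grV (d i)) (u : V) (e : ℤ) :
    ∑ k : Fin (n + 1), (((n - (k : ℕ)).factorial * ((k : ℕ) + 1).factorial : ℕ) : K)⁻¹ •
        ∑ σ : Equiv.Perm (Fin (n + 1)), koszulSign K (fun i => d i - 1) σ •
          (-1 : K) ^ (e * ∑ i ∈ Finset.univ.filter (fun i : Fin (n + 1) => i ≤ k),
            (d (σ i) - 1)) • F.cut n k (k.succ.insertNth u fun i => v (σ i))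
      = F.par e (F.word n v) ⊗ₜ[K] F.incl u
        + TensorProduct.map (F.par e) (F.mul hV u) (F.comul (F.word n v)) := by
  rw [Fin.sum_univ_castSucc, add_comm]
  congr 1
  · have hs : ∀ σ : Equiv.Perm (Fin (n + 1)),
        ∑ i ∈ Finset.univ.filter (fun i : Fin (n + 1) => i ≤ Fin.last n), (d (σ i) - 1)
          = ∑ i, (d i - 1) := fun σ => by
      rw [Finset.filter_true_of_mem fun i _ => Fin.le_last i]
      exact Equiv.sum_comp σ fun i => d i - 1
    simp only [hs, cut_insertNth_last]
    simp only [smul_comm _ ((-1 : K) ^ (e * ∑ i, (d i - 1))), TensorProduct.smul_tmul']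
    rw [← TensorProduct.sum_tmul, ← Finset.smul_sum, sum_koszulSign_smul_word hv, par_word e hv,
      TensorProduct.smul_tmul', smul_comm]
    have h2 : ((n + 1).factorial : K) ≠ 0 := Nat.cast_ne_zero.2 (Nat.factorial_ne_zero _)
    simp [h2]
  · cases n with
    | zero => simp [word_zero]
    | succ n =>
      rw [comul_word_eq_sum hv, map_sum]
      refine Finset.sum_congr rfl fun k _ => ?_
      have : ∀ σ : Equiv.Perm (Fin (n + 2)),
          (-1 : K) ^ (e * ∑ i ∈ Finset.univ.filter (fun i : Fin (n + 2) => i ≤ k.castSucc),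
            (d (σ i) - 1)) • F.cut (n + 1) k.castSucc (k.castSucc.succ.insertNth u fun i => v (σ i))
          = TensorProduct.map (F.par e) (F.mul hV u) (F.cut n k fun i => v (σ i)) := fun σ => by
        rw [cut_insertNth_castSucc hV, ← map_smul, ← map_par_cut e (fun i => hv (σ i)),
          ← LinearMap.comp_apply, ← TensorProduct.map_comp]
        rfl
      simp only [this, ← map_smul]
      rw [← map_sum, ← map_smul]
      congr 2

/-- The coproduct of a product with a cogenerator. -/
theorem comul_mul (hV : ⨆ i, grV i = ⊤) {e : ℤ} {u : V} (hu : u ∈ grV (e + 1)) (x : F.C) :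
    F.comul (F.mul hV u x) = F.incl u ⊗ₜ[K] x + F.par e x ⊗ₜ[K] F.incl u
      + TensorProduct.map (F.mul hV u) LinearMap.id (F.comul x)
      + TensorProduct.map (F.par e) (F.mul hV u) (F.comul x) := by
  suffices h : F.comul ∘ₗ F.mul hV u = TensorProduct.mk K _ _ (F.incl u)
      + (TensorProduct.mk K _ _).flip (F.incl u) ∘ₗ F.par e
      + TensorProduct.map (F.mul hV u) LinearMap.id ∘ₗ F.comul
      + TensorProduct.map (F.par e) (F.mul hV u) ∘ₗ F.comul from LinearMap.congr_fun h x
  refine map_ext hV fun n i x hx => ?_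
  refine (Submodule.span_le.2 ?_ : F.wgr n i ≤ LinearMap.eqLocus _ _) hx
  rintro _ ⟨d, v, hv, rfl, rfl⟩
  have h1 := comul_mul_word_left (F := F) hV hv u
  have h2 := comul_mul_word_right (F := F) hV hv u e
  have hcons : ∀ i, (Fin.cons u v : Fin (n + 2) → V) i
      ∈ grV ((Fin.cons (e + 1) d : Fin (n + 2) → ℤ) i) := fun i => by
    refine Fin.cases ?_ ?_ i
    · exact hu
    · exact hv
  have key : F.comul (F.mul hV u (F.word n v))
      = (F.incl u ⊗ₜ[K] F.word n v
        + TensorProduct.map (F.mul hV u) LinearMap.id (F.comul (F.word n v)))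
      + (F.par e (F.word n v) ⊗ₜ[K] F.incl u
        + TensorProduct.map (F.par e) (F.mul hV u) (F.comul (F.word n v))) := by
    rw [← h1, ← h2, mul_word, comul_word_eq_sum hcons, ← Finset.sum_add_distrib]
    refine Finset.sum_congr rfl fun k _ => ?_
    rw [cutSum_cons hu hv, smul_add, smul_smul, smul_smul, inv_factorial_mul_succ,
      Nat.succ_sub (Nat.lt_succ_iff.1 k.isLt), inv_succ_factorial_mul]
    simp only [add_sub_cancel_right]
  rw [SetLike.mem_coe, LinearMap.mem_eqLocus]
  simp only [LinearMap.add_apply, LinearMap.comp_apply, TensorProduct.mk_apply, LinearMap.flip_apply,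
    key]
  abel

end CofreeData

namespace CofreeData

section
variable {F : CofreeData K V grV}

theorem wgr_zero_le {i : ℤ} {S : Submodule K F.C} (h : ∀ u ∈ grV (i + 1), F.incl u ∈ S) :
    F.wgr 0 i ≤ S := by
  refine Submodule.span_le.2 ?_
  rintro _ ⟨d, v, hv, rfl, rfl⟩
  rw [SetLike.mem_coe, word_zero]
  exact h _ (by simpa using hv 0)

theorem wgr_succ_le (hV : ⨆ i, grV i = ⊤) {n : ℕ} {i : ℤ} {S : Submodule K F.C}
    (h : ∀ e j, e + j = i → ∀ u ∈ grV (e + 1), ∀ y ∈ F.wgr n j, F.mul hV u y ∈ S) :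
    F.wgr (n + 1) i ≤ S := by
  refine Submodule.span_le.2 ?_
  rintro _ ⟨d, v, hv, rfl, rfl⟩
  rw [SetLike.mem_coe, ← Fin.cons_self_tail v, ← mul_word hV]
  refine h (d 0 - 1) (∑ j : Fin (n + 1), (d j.succ - 1)) (Fin.sum_univ_succ fun j => d j - 1).symm _ ?_ _
    (word_mem_wgr fun j => hv j.succ)
  simpa using hv 0

theorem par_mem {e i : ℤ} {x : F.C} {S : Submodule K F.C} (hx : x ∈ F.grC i) (hS : x ∈ S) :
    F.par e x ∈ S := by
  rw [F.par_apply e i x hx]; exact S.smul_mem _ hS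

/-- The tensors in `C ⊗ C` of weight `n` and degree `i`. -/
def tgr (F : CofreeData K V grV) (n : ℕ) (i : ℤ) : Submodule K (F.C ⊗[K] F.C) :=
  Submodule.span K {t | ∃ (a b : ℕ) (j k : ℤ) (x y : F.C),
    x ∈ F.wgr a j ∧ y ∈ F.wgr b k ∧ a + b + 1 = n ∧ j + k = i ∧ x ⊗ₜ[K] y = t}

theorem tmul_mem_tgr {a b n : ℕ} {j k i : ℤ} {x y : F.C} (hx : x ∈ F.wgr a j) (hy : y ∈ F.wgr b k)
    (hn : a + b + 1 = n) (hi : j + k = i) : x ⊗ₜ[K] y ∈ F.tgr n i :=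
  Submodule.subset_span ⟨a, b, j, k, x, y, hx, hy, hn, hi, rfl⟩

theorem tgr_le {n : ℕ} {i : ℤ} {S : Submodule K (F.C ⊗[K] F.C)}
    (h : ∀ a b j k, a + b + 1 = n → j + k = i → ∀ x ∈ F.wgr a j, ∀ y ∈ F.wgr b k, x ⊗ₜ[K] y ∈ S) :
    F.tgr n i ≤ S := by
  refine Submodule.span_le.2 ?_
  rintro _ ⟨a, b, j, k, x, y, hx, hy, hn, hi, rfl⟩
  exact h a b j k hn hi x hx y hy

theorem tmul_ext {K : Type} [Field K] {V : Type} [AddCommGroup V] [Module K V]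
    {grV : ℤ → Submodule K V} {V' : Type} [AddCommGroup V'] [Module K V'] {grV' : ℤ → Submodule K V'}
    {F : CofreeData K V grV} {F' : CofreeData K V' grV'}
    {W : Type*} [AddCommGroup W] [Module K W] {f g : F.C ⊗[K] F'.C →ₗ[K] W}
    (h : ∀ i j, ∀ x ∈ F.grC i, ∀ y ∈ F'.grC j, f (x ⊗ₜ[K] y) = g (x ⊗ₜ[K] y)) : f = g := by
  refine TensorProduct.ext ?_
  refine F.grC_internal.linearMap_ext fun i x hx => ?_
  exact F'.grC_internal.linearMap_ext fun j y hy => h i j x hx y hy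

variable [CharZero K]

theorem comul_mem_tgr (hV : ⨆ i, grV i = ⊤) {n : ℕ} {i : ℤ} {x : F.C} (hx : x ∈ F.wgr n i) :
    F.comul x ∈ F.tgr n i := by
  induction n generalizing i x with
  | zero =>
    refine (wgr_zero_le fun u hu => ?_ : _ ≤ (F.tgr 0 i).comap F.comul) hx
    simp
  | succ n ih =>
    refine (wgr_succ_le hV fun e j hij u hu y hy => ?_ : _ ≤ (F.tgr (n + 1) i).comap F.comul) hx
    rw [Submodule.mem_comap, comul_mul hV hu]
    have hyC := wgr_le_grC _ _ hy
    refine add_mem (add_mem (add_mem ?_ ?_) ?_) ?_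
    · exact tmul_mem_tgr (incl_mem_wgr hu) hy (by omega) hij
    · exact tmul_mem_tgr (par_mem hyC hy) (incl_mem_wgr hu) (by omega) (by omega)
    · refine (tgr_le fun a b k l hn hi x hx z hz => ?_ :
        F.tgr n j ≤ (F.tgr (n + 1) i).comap (TensorProduct.map (F.mul hV u) LinearMap.id)) (ih hy)
      exact tmul_mem_tgr (mul_mem_wgr hV hu hx) hz (by omega) (by omega)
    · refine (tgr_le fun a b k l hn hi x hx z hz => ?_ :
        F.tgr n j ≤ (F.tgr (n + 1) i).comap (TensorProduct.map (F.par e) (F.mul hV u))) (ih hy)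
      exact tmul_mem_tgr (par_mem (wgr_le_grC _ _ hx) hx) (mul_mem_wgr hV hu hz)
        (by omega) (by omega)

theorem comul_par (hV : ⨆ i, grV i = ⊤) (e : ℤ) (x : F.C) :
    F.comul (F.par e x) = TensorProduct.map (F.par e) (F.par e) (F.comul x) := by
  suffices h : F.comul ∘ₗ F.par e = TensorProduct.map (F.par e) (F.par e) ∘ₗ F.comul from
    LinearMap.congr_fun h x
  refine map_ext hV fun n i x hx => ?_
  rw [LinearMap.comp_apply, LinearMap.comp_apply, F.par_apply e i x (wgr_le_grC _ _ hx), map_smul]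
  symm
  refine (tgr_le fun a b j k _ hi y hy z hz => ?_ : _ ≤ LinearMap.eqLocus
    (TensorProduct.map (F.par e) (F.par e)) ((-1 : K) ^ (e * i) • LinearMap.id))
    (comul_mem_tgr hV hx)
  rw [LinearMap.mem_eqLocus, TensorProduct.map_tmul, F.par_apply e j y (wgr_le_grC _ _ hy),
    F.par_apply e k z (wgr_le_grC _ _ hz), TensorProduct.smul_tmul_smul, ← hi, mul_add,
    zpow_add₀ (by simp)]
  simp

theorem coassoc (hV : ⨆ i, grV i = ⊤) (x : F.C) :
    TensorProduct.assoc K _ _ _ (TensorProduct.map F.comul LinearMap.id (F.comul x))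
      = TensorProduct.map LinearMap.id F.comul (F.comul x) := by
  suffices h : (TensorProduct.assoc K F.C F.C F.C).toLinearMap
      ∘ₗ TensorProduct.map F.comul LinearMap.id ∘ₗ F.comul
      = TensorProduct.map LinearMap.id F.comul ∘ₗ F.comul from LinearMap.congr_fun h x
  refine map_ext hV fun n => ?_
  induction n with
  | zero =>
    refine fun i x hx => (wgr_zero_le fun u hu => ?_ : _ ≤ LinearMap.eqLocus _ _) hx
    simp
  | succ n ih =>
    refine fun i x hx => (wgr_succ_le hV fun e j hij u hu y hy => ?_ :
      _ ≤ LinearMap.eqLocus _ _) hx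
    have ih : TensorProduct.assoc K _ _ _ (TensorProduct.map F.comul LinearMap.id (F.comul y))
      = TensorProduct.map LinearMap.id F.comul (F.comul y) := ih j y hy
    let P := F.par e
    let m := F.mul hV u
    let I : F.C →ₗ[K] F.C := LinearMap.id
    let L : F.C →ₗ[K] F.C ⊗[K] F.C := TensorProduct.mk K _ _ (F.incl u)
    let L2 : F.C ⊗[K] F.C →ₗ[K] F.C ⊗[K] (F.C ⊗[K] F.C) := TensorProduct.mk K _ _ (F.incl u)
    let R : F.C →ₗ[K] F.C ⊗[K] F.C := (TensorProduct.mk K _ _).flip (F.incl u)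
    have hm : ∀ z, F.comul (m z) = L z + R (P z) + TensorProduct.map m I (F.comul z)
        + TensorProduct.map P m (F.comul z) := fun z => comul_mul hV hu z
    have assoc3 : ∀ (f g h : F.C →ₗ[K] F.C) s,
        TensorProduct.assoc K _ _ _ (TensorProduct.map (TensorProduct.map f g) h s)
          = TensorProduct.map f (TensorProduct.map g h) (TensorProduct.assoc K _ _ _ s) :=
      fun f g h s => (LinearMap.congr_fun (TensorProduct.map_map_comp_assoc_eq f g h) s).symm
    have h1 : ∀ t, TensorProduct.assoc K _ _ _ (TensorProduct.map F.comul I (TensorProduct.map m I t))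
        = L2 t + TensorProduct.map P L t
          + TensorProduct.map m (TensorProduct.map I I)
            (TensorProduct.assoc K _ _ _ (TensorProduct.map F.comul I t))
          + TensorProduct.map P (TensorProduct.map m I)
            (TensorProduct.assoc K _ _ _ (TensorProduct.map F.comul I t)) := fun t => by
      simp only [← assoc3]
      induction t with
      | zero => simp only [map_zero, add_zero]
      | add a b ha hb => simp only [map_add, ha, hb]; abel
      | tmul a b =>
        simp only [TensorProduct.map_tmul, hm, TensorProduct.add_tmul, map_add]
        simp [L, R, L2, I, P]
    have h2 : ∀ t, TensorProduct.map I F.comul (TensorProduct.map P m t)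
        = TensorProduct.map P L t + TensorProduct.map P (R ∘ₗ P) t
          + TensorProduct.map P (TensorProduct.map m I) (TensorProduct.map I F.comul t)
          + TensorProduct.map P (TensorProduct.map P m) (TensorProduct.map I F.comul t) :=
      fun t => by
      induction t with
      | zero => simp only [map_zero, add_zero]
      | add a b ha hb => simp only [map_add, ha, hb]; abel
      | tmul a b =>
        simp only [TensorProduct.map_tmul, hm, TensorProduct.tmul_add]
        simp [L, R, I, P]
    have h3 : ∀ t, TensorProduct.assoc K _ _ _ (TensorProduct.map F.comul I (TensorProduct.map P m t))
        = TensorProduct.map P (TensorProduct.map P m)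
          (TensorProduct.assoc K _ _ _ (TensorProduct.map F.comul I t)) := fun t => by
      simp only [← assoc3]
      induction t with
      | zero => simp only [map_zero]
      | add a b ha hb => simp only [map_add, ha, hb]
      | tmul a b =>
        simp only [TensorProduct.map_tmul, P, comul_par hV]
        simp [I]
    have h4 : ∀ t, TensorProduct.assoc K _ _ _ (TensorProduct.map P P t ⊗ₜ[K] F.incl u)
        = TensorProduct.map P (R ∘ₗ P) t := fun t => by
      induction t with
      | zero => simp
      | add a b ha hb => simp only [map_add, TensorProduct.add_tmul, ha, hb]
      | tmul a b => simp [R]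
    have h5 : ∀ t, TensorProduct.map I F.comul (TensorProduct.map m I t)
        = TensorProduct.map m (TensorProduct.map I I) (TensorProduct.map I F.comul t) := fun t => by
      induction t with
      | zero => simp only [map_zero]
      | add a b ha hb => simp only [map_add, ha, hb]
      | tmul a b => simp [I]
    have e1 : TensorProduct.map F.comul I (L y) = 0 := by simp [L]
    have e2 : TensorProduct.assoc K _ _ _ (TensorProduct.map F.comul I (R (P y)))
        = TensorProduct.map P (R ∘ₗ P) (F.comul y) := by
      rw [← h4, ← comul_par hV]; simp [R, I, P]
    have e3 : TensorProduct.map I F.comul (L y) = L2 (F.comul y) := by simp [L, L2, I]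
    have e4 : TensorProduct.map I F.comul (R (P y)) = 0 := by simp [R]
    show TensorProduct.assoc K _ _ _ (TensorProduct.map F.comul I (F.comul (m y)))
      = TensorProduct.map I F.comul (F.comul (m y))
    simp only [hm, map_add, e1, e2, e3, e4, h1, h2, h3, h5]
    rw [ih]
    simp only [map_zero]
    abel

/-- The graded interchange of the tensor factors. -/
def swap (F : CofreeData K V grV) : F.C ⊗[K] F.C →ₗ[K] F.C ⊗[K] F.C :=
  (TensorProduct.comm K F.C F.C).toLinearMap ∘ₗ ((2 : K)⁻¹ •
    (LinearMap.id + TensorProduct.map (F.par 1) LinearMap.id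
      + TensorProduct.map LinearMap.id (F.par 1) - TensorProduct.map (F.par 1) (F.par 1)))

theorem swap_tmul {i j : ℤ} {x y : F.C} (hx : x ∈ F.grC i) (hy : y ∈ F.grC j) :
    F.swap (x ⊗ₜ[K] y) = (-1 : K) ^ (i * j) • y ⊗ₜ[K] x := by
  have h : (2 : K)⁻¹ * (1 + (-1) ^ i + (-1) ^ j - (-1) ^ i * (-1) ^ j) = (-1) ^ (i * j) := by
    rcases Int.even_or_odd i with hi | hi <;> rcases Int.even_or_odd j with hj | hj
    · rw [hi.neg_one_zpow, hj.neg_one_zpow, (hi.mul_right j).neg_one_zpow]; norm_num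
    · rw [hi.neg_one_zpow, hj.neg_one_zpow, (hi.mul_right j).neg_one_zpow]; norm_num
    · rw [hi.neg_one_zpow, hj.neg_one_zpow, (hj.mul_left i).neg_one_zpow]; norm_num
    · rw [hi.neg_one_zpow, hj.neg_one_zpow, (hi.mul hj).neg_one_zpow]; norm_num
  rw [← h]
  simp only [swap, LinearMap.comp_apply, LinearMap.smul_apply, LinearMap.sub_apply,
    LinearMap.add_apply, TensorProduct.map_tmul, LinearMap.id_apply, F.par_apply 1 i x hx,
    F.par_apply 1 j y hy, one_mul, ← TensorProduct.smul_tmul', TensorProduct.tmul_smul, map_smul,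
    map_sub, map_add, LinearEquiv.coe_coe, TensorProduct.comm_tmul]
  module

theorem swap_comul (hV : ⨆ i, grV i = ⊤) (x : F.C) : F.swap (F.comul x) = F.comul x := by
  suffices h : F.swap ∘ₗ F.comul = F.comul from LinearMap.congr_fun h x
  refine map_ext hV fun n => ?_
  induction n with
  | zero =>
    refine fun i x hx => (wgr_zero_le fun u hu => ?_ : _ ≤ LinearMap.eqLocus _ _) hx
    simp
  | succ n ih =>
    refine fun i x hx => (wgr_succ_le hV fun e j hij u hu y hy => ?_ :
      _ ≤ LinearMap.eqLocus _ _) hx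
    have hyC := wgr_le_grC _ _ hy
    have ih : F.swap (F.comul y) = F.comul y := ih j y hy
    have h1 : F.swap ∘ₗ TensorProduct.map (F.mul hV u) LinearMap.id
        = TensorProduct.map (F.par e) (F.mul hV u) ∘ₗ F.swap := by
      refine tmul_ext fun k l a ha b hb => ?_
      simp only [LinearMap.comp_apply, TensorProduct.map_tmul, LinearMap.id_apply,
        swap_tmul ha hb, swap_tmul (mul_grC hV hu a ha) hb, map_smul, F.par_apply e l b hb,
        ← TensorProduct.smul_tmul', smul_smul, ← zpow_add₀ (show (-1 : K) ≠ 0 by simp)]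
      congr 2; ring
    have h2 : F.swap ∘ₗ TensorProduct.map (F.par e) (F.mul hV u)
        = TensorProduct.map (F.mul hV u) LinearMap.id ∘ₗ F.swap := by
      refine tmul_ext fun k l a ha b hb => ?_
      simp only [LinearMap.comp_apply, TensorProduct.map_tmul, LinearMap.id_apply,
        swap_tmul ha hb, swap_tmul ha (mul_grC hV hu b hb), map_smul, F.par_apply e k a ha,
        ← TensorProduct.smul_tmul', smul_smul, ← zpow_add₀ (show (-1 : K) ≠ 0 by simp)]
      congr 1
      rw [show e * k + k * (e + l) = k * l + (e * k + e * k) by ring, zpow_add₀ (by simp),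
        zpow_add₀ (by simp), neg_one_zpow_mul_self, mul_one]
    have h1c := LinearMap.congr_fun h1 (F.comul y)
    have h2c := LinearMap.congr_fun h2 (F.comul y)
    simp only [LinearMap.comp_apply] at h1c h2c
    have e1 : F.swap (F.incl u ⊗ₜ[K] y) = F.par e y ⊗ₜ[K] F.incl u := by
      rw [swap_tmul (incl_grC hu) hyC, F.par_apply e j y hyC, TensorProduct.smul_tmul']
    have e2 : F.swap (F.par e y ⊗ₜ[K] F.incl u) = F.incl u ⊗ₜ[K] y := by
      rw [F.par_apply e j y hyC, ← TensorProduct.smul_tmul', map_smul,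
        swap_tmul hyC (incl_grC hu), smul_smul, mul_comm j, neg_one_zpow_mul_self, one_smul]
    rw [LinearMap.mem_eqLocus, LinearMap.comp_apply, comul_mul hV hu, map_add, map_add, map_add,
      e1, e2, h1c, h2c, ih]
    abel

end

end CofreeData

namespace CofreeData

section
variable {V' : Type} [AddCommGroup V'] [Module K V'] {grV' : ℤ → Submodule K V'}
  {F : CofreeData K V grV} {F' : CofreeData K V' grV'}

/-- The linear map `x ⊗ y ↦ q x · A y`. -/
def tmulLift (hV' : ⨆ i, grV' i = ⊤) (q : F.C →ₗ[K] V') (A : F.C →ₗ[K] F'.C) :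
    F.C ⊗[K] F.C →ₗ[K] F'.C :=
  TensorProduct.lift ((F'.mul hV').compl₁₂ q A)

theorem tmulLift_tmul (hV' : ⨆ i, grV' i = ⊤) (q : F.C →ₗ[K] V') (A : F.C →ₗ[K] F'.C) (x y : F.C) :
    tmulLift hV' q A (x ⊗ₜ[K] y) = F'.mul hV' (q x) (A y) := rfl

/-- The linear map `ι q + m (q ⊗ A) Δ`; it is a coderivation along `A` with corestriction `q`
whenever `A` is a morphism. -/
def lifting (hV' : ⨆ i, grV' i = ⊤) (q : F.C →ₗ[K] V') (A : F.C →ₗ[K] F'.C) : F.C →ₗ[K] F'.C :=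
  F'.incl ∘ₗ q + tmulLift hV' q A ∘ₗ F.comul

theorem lifting_apply (hV' : ⨆ i, grV' i = ⊤) (q : F.C →ₗ[K] V') (A : F.C →ₗ[K] F'.C) (x : F.C) :
    lifting hV' q A x = F'.incl (q x) + tmulLift hV' q A (F.comul x) := rfl

theorem xi_lifting (hV' : ⨆ i, grV' i = ⊤) (q : F.C →ₗ[K] V') (A : F.C →ₗ[K] F'.C) (x : F.C) :
    F'.xi (lifting hV' q A x) = q x := by
  have : F'.xi ∘ₗ tmulLift hV' q A = 0 := TensorProduct.ext' fun x y => xi_mul hV' _ _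
  rw [lifting_apply, map_add, xi_incl, ← LinearMap.comp_apply, this]
  simp

variable [CharZero K]

theorem comul_mem_of_wt (hV : ⨆ i, grV i = ⊤) {n : ℕ} {S : Submodule K (F.C ⊗[K] F.C)}
    (h : ∀ a b, a + b + 1 = n → ∀ x ∈ F.wt a, ∀ y ∈ F.wt b, x ⊗ₜ[K] y ∈ S) :
    ∀ x ∈ F.wt n, F.comul x ∈ S := by
  intro x hx
  rw [wt_eq_iSup hV] at hx
  refine (iSup_le fun i x hx => ?_ : _ ≤ S.comap F.comul) hx
  exact (tgr_le fun a b j k hn _ x hx y hy => h a b hn x (wgr_le_wt _ _ hx) y (wgr_le_wt _ _ hy) :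
    F.tgr n i ≤ S) (comul_mem_tgr hV hx)

theorem eq_on_comul (hV : ⨆ i, grV i = ⊤) {W : Type*} [AddCommGroup W] [Module K W] {n : ℕ}
    {f g : F.C ⊗[K] F.C →ₗ[K] W}
    (h : ∀ a b, a + b + 1 = n → ∀ x ∈ F.wt a, ∀ y ∈ F.wt b, f (x ⊗ₜ[K] y) = g (x ⊗ₜ[K] y)) :
    ∀ x ∈ F.wt n, f (F.comul x) = g (F.comul x) :=
  fun x hx => comul_mem_of_wt hV (S := LinearMap.eqLocus f g) h x hx

theorem map_comul_eq_of_lt (hV : ⨆ i, grV i = ⊤) {W₁ W₂ : Type*} [AddCommGroup W₁] [Module K W₁]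
    [AddCommGroup W₂] [Module K W₂] {n : ℕ} {f f' : F.C →ₗ[K] W₁} {g g' : F.C →ₗ[K] W₂}
    (hf : ∀ m < n, ∀ x ∈ F.wt m, f x = f' x) (hg : ∀ m < n, ∀ x ∈ F.wt m, g x = g' x) :
    ∀ x ∈ F.wt n, TensorProduct.map f g (F.comul x) = TensorProduct.map f' g' (F.comul x) :=
  eq_on_comul hV fun a b hn x hx y hy => by
    rw [TensorProduct.map_tmul, TensorProduct.map_tmul, hf a (by omega) x hx, hg b (by omega) y hy]

theorem tmulLift_comul_congr (hV : ⨆ i, grV i = ⊤) (hV' : ⨆ i, grV' i = ⊤) {n : ℕ}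
    {q q' : F.C →ₗ[K] V'} {A A' : F.C →ₗ[K] F'.C}
    (hq : ∀ m < n, ∀ x ∈ F.wt m, q x = q' x) (hA : ∀ m < n, ∀ x ∈ F.wt m, A x = A' x) :
    ∀ x ∈ F.wt n, tmulLift hV' q A (F.comul x) = tmulLift hV' q' A' (F.comul x) :=
  eq_on_comul hV fun a b hn x hx y hy => by
    rw [tmulLift_tmul, tmulLift_tmul, hq a (by omega) x hx, hA b (by omega) y hy]

theorem tmulLift_comul_grC (hV : ⨆ i, grV i = ⊤) (hV' : ⨆ i, grV' i = ⊤) {n : ℕ} {e : ℤ}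
    {q : F.C →ₗ[K] V'} {A : F.C →ₗ[K] F'.C}
    (hq : ∀ m < n, ∀ i, ∀ x ∈ F.wgr m i, q x ∈ grV' (i + e + 1))
    (hA : ∀ m < n, ∀ i, ∀ x ∈ F.wgr m i, A x ∈ F'.grC i) {i : ℤ} :
    ∀ x ∈ F.wgr n i, tmulLift hV' q A (F.comul x) ∈ F'.grC (i + e) := fun x hx =>
  (tgr_le fun a b j k hn hi x hx y hy => by
    rw [Submodule.mem_comap, tmulLift_tmul, ← hi, show j + k + e = j + e + k by ring]
    exact mul_grC hV' (hq a (by omega) j x hx) _ (hA b (by omega) k y hy) :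
    F.tgr n i ≤ (F'.grC (i + e)).comap (tmulLift hV' q A)) (comul_mem_tgr hV hx)

theorem lifting_grC (hV : ⨆ i, grV i = ⊤) (hV' : ⨆ i, grV' i = ⊤) {e : ℤ}
    {q : F.C →ₗ[K] V'} {A : F.C →ₗ[K] F'.C} (hq : ∀ i, ∀ x ∈ F.grC i, q x ∈ grV' (i + e + 1))
    (hA : ∀ i, ∀ x ∈ F.grC i, A x ∈ F'.grC i) (i : ℤ) :
    ∀ x ∈ F.grC i, lifting hV' q A x ∈ F'.grC (i + e) :=
  map_grC hV fun _ x hx => add_mem (incl_grC (hq i x (wgr_le_grC _ _ hx)))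
    (tmulLift_comul_grC hV hV' (fun _ _ i x hx => hq i x (wgr_le_grC _ _ hx))
      (fun _ _ i x hx => hA i x (wgr_le_grC _ _ hx)) x hx)

/-- `lifting q A` is a coderivation along `A`, in each weight below which `A` is a morphism. -/
theorem comul_lifting (hV : ⨆ i, grV i = ⊤) (hV' : ⨆ i, grV' i = ⊤) {n : ℕ} {e : ℤ}
    {q : F.C →ₗ[K] V'} {A : F.C →ₗ[K] F'.C} (hq : ∀ i, ∀ x ∈ F.grC i, q x ∈ grV' (i + e + 1))
    (hA : ∀ i, ∀ x ∈ F.grC i, A x ∈ F'.grC i)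
    (hAm : ∀ m < n, ∀ x ∈ F.wt m, F'.comul (A x) = TensorProduct.map A A (F.comul x)) :
    ∀ x ∈ F.wt n, F'.comul (lifting hV' q A x)
      = TensorProduct.map (lifting hV' q A) A (F.comul x)
        + TensorProduct.map (A ∘ₗ F.par e) (lifting hV' q A) (F.comul x) := by
  suffices h : ∀ i, ∀ x ∈ F.wgr n i, F'.comul (lifting hV' q A x)
      = (TensorProduct.map (lifting hV' q A) A
        + TensorProduct.map (A ∘ₗ F.par e) (lifting hV' q A)) (F.comul x) from
    eq_on_wt (f := F'.comul ∘ₗ lifting hV' q A) (g := (TensorProduct.map (lifting hV' q A) A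
        + TensorProduct.map (A ∘ₗ F.par e) (lifting hV' q A)) ∘ₗ F.comul) hV h
  intro i x hx
  let M := tmulLift hV' q A
  let I : F.C →ₗ[K] F.C := LinearMap.id
  let assoc := (TensorProduct.assoc K F.C F.C F.C).toLinearMap
  let assoc' := (TensorProduct.assoc K F.C F.C F.C).symm.toLinearMap
  have h3 : ∀ j, ∀ y ∈ F.grC j, TensorProduct.map (F'.mul hV' (q y)) LinearMap.id
      ∘ₗ TensorProduct.map A A = TensorProduct.map M A ∘ₗ assoc' ∘ₗ TensorProduct.mk K _ _ y :=
    fun j y hy => TensorProduct.ext' fun a b => by simp [assoc', M, tmulLift_tmul]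
  have h4 : ∀ j, ∀ y ∈ F.grC j, TensorProduct.map (F'.par (j + e)) (F'.mul hV' (q y))
      ∘ₗ TensorProduct.map A A = TensorProduct.map (A ∘ₗ F.par e) M ∘ₗ assoc
        ∘ₗ TensorProduct.map F.swap I ∘ₗ assoc' ∘ₗ TensorProduct.mk K _ _ y :=
    fun j y hy => tmul_ext fun k l a ha b hb => by
      simp only [LinearMap.comp_apply, assoc', assoc, LinearEquiv.coe_coe, TensorProduct.mk_apply,
        TensorProduct.assoc_symm_tmul, TensorProduct.map_tmul, swap_tmul hy ha,
        ← TensorProduct.smul_tmul', map_smul, TensorProduct.assoc_tmul, F.par_apply e k a ha,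
        F'.par_apply _ k _ (hA k a ha), smul_smul]
      rw [← zpow_add₀ (by simp), add_mul]
      rfl
  have step : F'.comul (M (F.comul x)) = TensorProduct.map (F'.incl ∘ₗ q) A (F.comul x)
      + TensorProduct.map (A ∘ₗ F.par e) (F'.incl ∘ₗ q) (F.swap (F.comul x))
      + TensorProduct.map M A (assoc' (TensorProduct.map I F.comul (F.comul x)))
      + TensorProduct.map (A ∘ₗ F.par e) M (assoc (TensorProduct.map F.swap I
          (assoc' (TensorProduct.map I F.comul (F.comul x))))) := by
    refine (tgr_le fun a b j k hn hi y hy z hz => ?_ : F.tgr n i ≤ LinearMap.eqLocus (F'.comul ∘ₗ M)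
      (TensorProduct.map (F'.incl ∘ₗ q) A
      + TensorProduct.map (A ∘ₗ F.par e) (F'.incl ∘ₗ q) ∘ₗ F.swap
      + TensorProduct.map M A ∘ₗ assoc' ∘ₗ TensorProduct.map I F.comul
      + TensorProduct.map (A ∘ₗ F.par e) M ∘ₗ assoc ∘ₗ TensorProduct.map F.swap I
          ∘ₗ assoc' ∘ₗ TensorProduct.map I F.comul)) (comul_mem_tgr hV hx)
    have hyC := wgr_le_grC _ _ hy
    have hzC := wgr_le_grC _ _ hz
    have e3 := LinearMap.congr_fun (h3 j y hyC) (F.comul z)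
    have e4 := LinearMap.congr_fun (h4 j y hyC) (F.comul z)
    simp only [LinearMap.comp_apply, TensorProduct.mk_apply] at e3 e4
    rw [LinearMap.mem_eqLocus]
    simp only [LinearMap.comp_apply, LinearMap.add_apply, TensorProduct.map_tmul, I,
      LinearMap.id_apply] at e3 e4 ⊢
    rw [← e3, ← e4, ← hAm b (by omega) z (wgr_le_wt _ _ hz), tmulLift_tmul,
      comul_mul hV' (hq j y hyC), swap_tmul hyC hzC]
    congr 3
    rw [F'.par_apply _ k _ (hA k z hzC), map_smul, TensorProduct.map_tmul, LinearMap.comp_apply,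
      F.par_apply e k z hzC, map_smul, ← TensorProduct.smul_tmul', ← TensorProduct.smul_tmul',
      smul_smul, ← zpow_add₀ (by simp), add_mul]
    rfl
  have hca : assoc' (TensorProduct.map I F.comul (F.comul x))
      = TensorProduct.map F.comul I (F.comul x) := by
    rw [← coassoc hV]
    exact LinearEquiv.symm_apply_apply _ _
  have hsw : TensorProduct.map F.swap I (TensorProduct.map F.comul I (F.comul x))
      = TensorProduct.map F.comul I (F.comul x) := by
    rw [← LinearMap.comp_apply, ← TensorProduct.map_comp,
      show F.swap ∘ₗ F.comul = F.comul from LinearMap.ext (swap_comul hV)]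
    rfl
  have hca' : assoc (TensorProduct.map F.comul I (F.comul x))
      = TensorProduct.map I F.comul (F.comul x) := coassoc hV x
  rw [hca, hsw, hca', swap_comul hV] at step
  have hM1 : TensorProduct.map M A (TensorProduct.map F.comul I (F.comul x))
      = TensorProduct.map (M ∘ₗ F.comul) A (F.comul x) := by
    rw [← LinearMap.comp_apply, ← TensorProduct.map_comp]; rfl
  have hM2 : TensorProduct.map (A ∘ₗ F.par e) M (TensorProduct.map I F.comul (F.comul x))
      = TensorProduct.map (A ∘ₗ F.par e) (M ∘ₗ F.comul) (F.comul x) := by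
    rw [← LinearMap.comp_apply, ← TensorProduct.map_comp]; rfl
  rw [lifting_apply, map_add, comul_incl, zero_add, step, hM1, hM2, lifting,
    TensorProduct.map_add_left, TensorProduct.map_add_right]
  simp only [LinearMap.add_apply]
  abel

end

section Euler

variable [CharZero K] {F : CofreeData K V grV}

theorem lifting_xi_id (hV : ⨆ i, grV i = ⊤) {n : ℕ} {x : F.C} (hx : x ∈ F.wt n) :
    lifting hV F.xi (LinearMap.id : F.C →ₗ[K] F.C) x = ((n + 1 : ℕ) : K) • x := by
  cases n with
  | zero =>
    rw [lifting_apply, incl_xi hx]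
    have : F.comul x = 0 := by rw [← incl_xi hx, comul_incl]
    simp [this]
  | succ n =>
    refine eq_on_wt (f := lifting hV F.xi LinearMap.id) (g := ((n + 1 + 1 : ℕ) : K) • LinearMap.id)
      hV (fun i x hx => ?_) x hx
    refine (Submodule.span_le.2 ?_ : F.wgr (n + 1) i ≤ LinearMap.eqLocus _ _) hx
    rintro _ ⟨d, v, hv, -, rfl⟩
    have h0 : ∀ w : Fin (n + 2) → V, tmulLift hV F.xi LinearMap.id (F.cut n 0 w)
        = F.word (n + 1) w := fun w => by
      rw [← Fin.cons_self_tail w, cut_cons_zero, tmulLift_tmul, xi_incl, LinearMap.id_apply,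
        mul_word]
    have hs : ∀ k : Fin n, ∀ w : Fin (n + 2) → V, tmulLift hV F.xi LinearMap.id (F.cut n k.succ w)
        = 0 := fun k w => by
      rw [cut, tmulLift_tmul]
      exact (congrArg (fun t => F.mul hV t _) (F.xi_word k _)).trans (by simp)
    rw [SetLike.mem_coe, LinearMap.mem_eqLocus, lifting_apply, xi_wt_succ (F.word_wt _ _), map_zero,
      zero_add, comul_word_eq_sum hv, map_sum, Fin.sum_univ_succ]
    simp only [cutSum, map_smul, map_sum, h0, hs, smul_zero, Finset.sum_const_zero, add_zero]
    rw [sum_koszulSign_smul_word hv, smul_smul, LinearMap.smul_apply, LinearMap.id_apply]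
    congr 1
    rw [Nat.factorial_succ (n + 1)]
    have h2 : ((n + 1).factorial : K) ≠ 0 := Nat.cast_ne_zero.2 (Nat.factorial_ne_zero _)
    push_cast
    simp
    field_simp

theorem exists_inverse_lifting_xi_id (hV : ⨆ i, grV i = ⊤) (F : CofreeData K V grV) :
    ∃ J : F.C →ₗ[K] F.C, (∀ n, ∀ x ∈ F.wt n, J x = ((n + 1 : ℕ) : K)⁻¹ • x) ∧
      ∀ x, J (lifting hV F.xi (LinearMap.id : F.C →ₗ[K] F.C) x) = x := by
  obtain ⟨J, hJ⟩ := F.wt_internal.exists_linearMap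
    (fun n => ((n + 1 : ℕ) : K)⁻¹ • (LinearMap.id : F.C →ₗ[K] F.C))
  refine ⟨J, hJ, fun x => ?_⟩
  suffices h : J ∘ₗ lifting hV F.xi LinearMap.id = LinearMap.id from LinearMap.congr_fun h x
  refine F.wt_internal.linearMap_ext fun n x hx => ?_
  rw [LinearMap.comp_apply, lifting_xi_id hV hx, map_smul, hJ n x hx, LinearMap.smul_apply,
    LinearMap.id_apply, smul_smul, mul_inv_cancel₀ (Nat.cast_ne_zero.2 (by omega)), one_smul]

theorem eq_zero_of_comul_eq_zero (hV : ⨆ i, grV i = ⊤) {x : F.C} (h : F.comul x = 0)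
    (hx : F.xi x = 0) : x = 0 := by
  obtain ⟨J, -, hJ⟩ := exists_inverse_lifting_xi_id hV F
  rw [← hJ x, lifting_apply, h, hx]
  simp

theorem eq_incl_of_comul_eq_zero (hV : ⨆ i, grV i = ⊤) {x : F.C} (h : F.comul x = 0) :
    x = F.incl (F.xi x) :=
  sub_eq_zero.1 (eq_zero_of_comul_eq_zero hV (by simp [h]) (by simp))

end Euler

end CofreeData

section Homotopy

theorem DirectSum.IsInternal.exists_projections {ι M : Type*} [DecidableEq ι] [AddCommGroup M]
    [Module K M] {A : ι → Submodule K M} (hA : DirectSum.IsInternal A) :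
    ∃ p : ι → M →ₗ[K] M, (∀ i x, p i x ∈ A i) ∧ (∀ i, ∀ x ∈ A i, p i x = x) ∧
      ∀ i j, j ≠ i → ∀ x ∈ A j, p i x = 0 := by
  choose p h1 h2 h3 using hA.exists_component
  exact ⟨p, h1, h2, h3⟩

theorem exists_contraction {L H : Type*} [AddCommGroup L] [Module K L] [AddCommGroup H] [Module K H]
    {d : L →ₗ[K] L} {f : H →ₗ[K] L} (hd : ∀ y, d (d y) = 0) (hdf : ∀ a, d (f a) = 0)
    (hinj : ∀ a, (∃ u, f a = d u) → a = 0) (hsurj : ∀ y, d y = 0 → ∃ a u, y = f a + d u) :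
    ∃ (p : L →ₗ[K] H) (h : L →ₗ[K] L), ∀ y, d (h y) + h (d y) = y - f (p y) := by
  let φ : H × L →ₗ[K] LinearMap.ker d := (LinearMap.coprod f d).codRestrict _ fun x => by
    simp [hd, hdf]
  have hφ : LinearMap.range φ = ⊤ := by
    rw [LinearMap.range_eq_top]
    rintro ⟨y, hy⟩
    obtain ⟨a, u, rfl⟩ := hsurj y hy
    exact ⟨(a, u), Subtype.ext (LinearMap.coprod_apply f d (a, u))⟩
  obtain ⟨s, hs⟩ := φ.exists_rightInverse_of_surjective hφ
  have hs : ∀ y : LinearMap.ker d, f (s y).1 + d (s y).2 = y := fun y =>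
    (LinearMap.coprod_apply f d (s y)).symm.trans (congrArg Subtype.val (LinearMap.congr_fun hs y))
  let δ : L →ₗ[K] LinearMap.ker d := d.codRestrict _ fun y => hd y
  let v : L →ₗ[K] L := LinearMap.snd K H L ∘ₗ s ∘ₗ δ
  have hv : ∀ y, d (v y) = d y := fun y => by
    have h1 : f (s (δ y)).1 + d (v y) = d y := hs (δ y)
    have h2 : (s (δ y)).1 = 0 := hinj _ ⟨y - v y, by rw [map_sub, ← h1]; abel⟩
    rwa [h2, map_zero, zero_add] at h1
  let N : L →ₗ[K] LinearMap.ker d := (LinearMap.id - v).codRestrict _ fun y => by simp [hv]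
  have hN : ∀ y, N (d y) = δ y := fun y => Subtype.ext (by
    have : δ (d y) = 0 := Subtype.ext (hd y)
    have h0 : v (d y) = 0 := by simp [v, this]
    show d y - v (d y) = d y
    rw [h0, sub_zero])
  refine ⟨LinearMap.fst K H L ∘ₗ s ∘ₗ N, LinearMap.snd K H L ∘ₗ s ∘ₗ N, fun y => ?_⟩
  have h1 : f (s (N y)).1 + d (s (N y)).2 = y - v y := hs (N y)
  have h2 : (s (N (d y))).2 = v y := by rw [hN]; rfl
  simp only [LinearMap.comp_apply, LinearMap.fst_apply, LinearMap.snd_apply]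
  rw [h2, eq_sub_iff_add_eq, add_right_comm, add_comm (d _), h1, sub_add_cancel]

theorem exists_graded_contraction {L H : Type*} [AddCommGroup L] [Module K L] [AddCommGroup H]
    [Module K H] {grL : ℤ → Submodule K L} {grH : ℤ → Submodule K H}
    (hL : DirectSum.IsInternal grL) (hH : DirectSum.IsInternal grH)
    {d : L →ₗ[K] L} {f : H →ₗ[K] L} (hdd : ∀ i, ∀ y ∈ grL i, d y ∈ grL (i + 1))
    (hfd : ∀ i, ∀ a ∈ grH i, f a ∈ grL i) (hd : ∀ y, d (d y) = 0) (hdf : ∀ a, d (f a) = 0)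
    (hinj : ∀ a, (∃ u, f a = d u) → a = 0) (hsurj : ∀ y, d y = 0 → ∃ a u, y = f a + d u) :
    ∃ (p : L →ₗ[K] H) (h : L →ₗ[K] L), (∀ i, ∀ y ∈ grL i, p y ∈ grH i) ∧
      (∀ i, ∀ y ∈ grL (i + 1), h y ∈ grL i) ∧ ∀ y, d (h y) + h (d y) = y - f (p y) := by
  obtain ⟨p, h, hph⟩ := exists_contraction hd hdf hinj hsurj
  obtain ⟨π, π1, π2, π3⟩ := hL.exists_projections
  obtain ⟨ρ, ρ1, ρ2, ρ3⟩ := hH.exists_projections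
  have cd : ∀ i y, π i (d y) = d (π (i - 1) y) := fun i y => by
    suffices e : π i ∘ₗ d = d ∘ₗ π (i - 1) from LinearMap.congr_fun e y
    refine hL.linearMap_ext fun j x hx => ?_
    by_cases hj : j = i - 1
    · subst hj
      have := hdd _ x hx
      rw [sub_add_cancel] at this
      rw [LinearMap.comp_apply, LinearMap.comp_apply, π2 _ _ hx, π2 _ _ this]
    · rw [LinearMap.comp_apply, LinearMap.comp_apply, π3 _ _ hj _ hx,
        π3 i (j + 1) (by omega) _ (hdd _ x hx), map_zero]
  have cf : ∀ i a, π i (f a) = f (ρ i a) := fun i a => by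
    suffices e : π i ∘ₗ f = f ∘ₗ ρ i from LinearMap.congr_fun e a
    refine hH.linearMap_ext fun j x hx => ?_
    by_cases hj : j = i
    · subst hj
      rw [LinearMap.comp_apply, LinearMap.comp_apply, ρ2 _ _ hx, π2 _ _ (hfd _ x hx)]
    · rw [LinearMap.comp_apply, LinearMap.comp_apply, ρ3 _ _ hj _ hx,
        π3 i j hj _ (hfd _ x hx), map_zero]
  obtain ⟨p', hp'⟩ := hL.exists_linearMap fun i => ρ i ∘ₗ p
  obtain ⟨h', hh'⟩ := hL.exists_linearMap fun i => π (i - 1) ∘ₗ h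
  refine ⟨p', h', fun i y hy => ?_, fun i y hy => ?_, fun y => ?_⟩
  · rw [hp' i y hy]; exact ρ1 _ _
  · rw [hh' _ y hy]; simpa using π1 (i + 1 - 1) (h y)
  · suffices e : d ∘ₗ h' + h' ∘ₗ d = LinearMap.id - f ∘ₗ p' from LinearMap.congr_fun e y
    refine hL.linearMap_ext fun i x hx => ?_
    have := congrArg (π i) (hph x)
    simp only [map_add, map_sub, cd i, cf i, π2 i x hx] at this
    simp only [LinearMap.add_apply, LinearMap.sub_apply, LinearMap.comp_apply, LinearMap.id_apply,
      hp' i x hx, hh' i x hx, hh' (i + 1) _ (hdd i x hx), add_sub_cancel_right, this]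

end Homotopy

namespace CofreeData

section
variable {F : CofreeData K V grV}

/-- A self-map of `Hom(C, W)` that determines its values in weight `n` from the weights below `n`
has a fixed point. -/
theorem exists_fixedPoint {W : Type*} [AddCommGroup W] [Module K W]
    (T : (F.C →ₗ[K] W) → (F.C →ₗ[K] W))
    (hT : ∀ n A A', (∀ m < n, ∀ x ∈ F.wt m, A x = A' x) → ∀ x ∈ F.wt n, T A x = T A' x) :
    ∃ A, T A = A := by
  let a : ℕ → (F.C →ₗ[K] W) := fun k => T^[k] 0
  have ha : ∀ k, a (k + 1) = T (a k) := fun k => Function.iterate_succ_apply' _ _ _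
  have stable : ∀ k l, k ≤ l → ∀ m < k, ∀ x ∈ F.wt m, a l x = a k x := by
    intro k
    induction k with
    | zero => intro l _ m hm; omega
    | succ k ih =>
      intro l hl m hm x hx
      obtain ⟨l, rfl⟩ : ∃ l', l = l' + 1 := ⟨l - 1, by omega⟩
      rw [ha, ha]
      exact hT m _ _ (fun m' hm' => ih l (by omega) m' (by omega)) x hx
  obtain ⟨A, hA⟩ := F.wt_internal.exists_linearMap fun n => a (n + 1)
  refine ⟨A, F.wt_internal.linearMap_ext fun n x hx => ?_⟩
  rw [hA n x hx, ha]
  refine hT n _ _ (fun m hm y hy => ?_) x hx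
  rw [hA m y hy, stable (m + 1) n hm m (by omega) y hy]

theorem par_zero : F.par 0 = LinearMap.id :=
  F.grC_internal.linearMap_ext fun i x hx => by simp [F.par_apply 0 i x hx]

theorem par_comm {V' : Type} [AddCommGroup V'] [Module K V'] {grV' : ℤ → Submodule K V'}
    {F' : CofreeData K V' grV'} {A : F.C →ₗ[K] F'.C} (hA : ∀ i, ∀ x ∈ F.grC i, A x ∈ F'.grC i)
    (e : ℤ) (x : F.C) : F'.par e (A x) = A (F.par e x) := by
  suffices h : F'.par e ∘ₗ A = A ∘ₗ F.par e from LinearMap.congr_fun h x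
  refine F.grC_internal.linearMap_ext fun i x hx => ?_
  rw [LinearMap.comp_apply, LinearMap.comp_apply, F.par_apply e i x hx,
    F'.par_apply e i _ (hA i x hx), map_smul]

theorem par_anticomm {A : F.C →ₗ[K] F.C} (hA : ∀ i, ∀ x ∈ F.grC i, A x ∈ F.grC (i + 1))
    (x : F.C) : F.par 1 (A x) = - A (F.par 1 x) := by
  suffices h : F.par 1 ∘ₗ A = - (A ∘ₗ F.par 1) from LinearMap.congr_fun h x
  refine F.grC_internal.linearMap_ext fun i x hx => ?_
  rw [LinearMap.neg_apply, LinearMap.comp_apply, LinearMap.comp_apply, F.par_apply 1 i x hx,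
    F.par_apply 1 _ _ (hA i x hx), map_smul, ← neg_smul, one_mul, one_mul, zpow_add₀ (by simp)]
  simp

end

section
variable [CharZero K] {V' : Type} [AddCommGroup V'] [Module K V'] {grV' : ℤ → Submodule K V'}
  {F : CofreeData K V grV} {F' : CofreeData K V' grV'}

theorem isCoderivation_lifting (hV : ⨆ i, grV i = ⊤) {e : ℤ} {q : F.C →ₗ[K] V}
    (hq : ∀ i, ∀ x ∈ F.grC i, q x ∈ grV (i + e + 1)) :
    F.IsCoderivation e (lifting hV q LinearMap.id) := by
  refine ⟨lifting_grC hV hV hq fun i x hx => hx, F.wt_internal.linearMap_ext fun n x hx => ?_⟩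
  have := comul_lifting hV hV (n := n) hq (A := LinearMap.id) (fun i x hx => hx)
    (fun m _ x _ => by rw [TensorProduct.map_id]; rfl) x hx
  simpa using this

/-- A coalgebra morphism whose corestriction solves `ξ Φ = f ξ - G Φ`, where `G` kills the
cogenerators. -/
theorem exists_isMorphism (hV : ⨆ i, grV i = ⊤) (hV' : ⨆ i, grV' i = ⊤) {f : V →ₗ[K] V'}
    (hf : ∀ i, ∀ a ∈ grV i, f a ∈ grV' i) {G : F'.C →ₗ[K] V'}
    (hG : ∀ i, ∀ x ∈ F'.grC i, G x ∈ grV' (i + 1)) (hG0 : ∀ a, G (F'.incl a) = 0) :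
    ∃ Φ : F.C →ₗ[K] F'.C, F.IsMorphism F' Φ ∧ ∀ x, F'.xi (Φ x) = f (F.xi x) - G (Φ x) := by
  let E : F.C →ₗ[K] F.C := lifting hV F.xi LinearMap.id
  have hE : ∀ n, ∀ x ∈ F.wt n, E x = ((n + 1 : ℕ) : K) • x := fun n x hx => lifting_xi_id hV hx
  obtain ⟨J, hJ, hJE⟩ := exists_inverse_lifting_xi_id hV F
  have hxi : ∀ i, ∀ x ∈ F.grC i, F.xi x ∈ grV (i + 0 + 1) := fun i x hx => by
    rw [add_zero]; exact xi_grC hV x hx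
  have hxi' : ∀ i, ∀ x ∈ F'.grC i, F'.xi x ∈ grV' (i + 0 + 1) := fun i x hx => by
    rw [add_zero]; exact xi_grC hV' x hx
  have hEC : F.IsCoderivation 0 E := isCoderivation_lifting hV hxi
  let Ψ : (F.C →ₗ[K] F'.C) → (F.C →ₗ[K] F'.C) := fun A =>
    tmulLift hV' (F'.xi ∘ₗ A ∘ₗ E) A ∘ₗ F.comul ∘ₗ J
  obtain ⟨Φ, hΦ⟩ := exists_fixedPoint
    (fun A => F'.incl ∘ₗ (f ∘ₗ F.xi - G ∘ₗ Ψ A) + Ψ A) (fun n A A' h x hx => by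
      have : Ψ A x = Ψ A' x := by
        simp only [Ψ, LinearMap.comp_apply, hJ n x hx, map_smul]
        congr 1
        refine tmulLift_comul_congr hV hV' (fun m hm y hy => ?_) h x hx
        simp only [LinearMap.comp_apply, hE m y hy, map_smul, h m hm y hy]
      simp only [LinearMap.add_apply, LinearMap.comp_apply, LinearMap.sub_apply, this])
  have hΦ : ∀ x, Φ x = F'.incl (f (F.xi x) - G (Ψ Φ x)) + Ψ Φ x := fun x =>
    (LinearMap.congr_fun hΦ x).symm
  have hxiΨ : ∀ x, F'.xi (Ψ Φ x) = 0 := fun x => by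
    have := xi_lifting hV' (F'.xi ∘ₗ Φ ∘ₗ E) Φ (J x)
    rw [lifting_apply, map_add, xi_incl] at this
    simpa [Ψ] using this
  have hxiΦ : ∀ x, F'.xi (Φ x) = f (F.xi x) - G (Φ x) := fun x => by
    have h1 : F'.xi (Φ x) = f (F.xi x) - G (Ψ Φ x) := by rw [hΦ, map_add, xi_incl, hxiΨ, add_zero]
    have h2 : G (Φ x) = G (Ψ Φ x) := by rw [hΦ, map_add, hG0, zero_add]
    rw [h1, h2]
  have hΦE : ∀ x, Φ (E x) = lifting hV' (F'.xi ∘ₗ Φ ∘ₗ E) Φ x := fun x => by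
    have h1 : Ψ Φ (E x) = tmulLift hV' (F'.xi ∘ₗ Φ ∘ₗ E) Φ (F.comul x) := by
      simp only [Ψ, LinearMap.comp_apply, E, hJE]
    have h2 : F'.xi (Φ (E x)) = f (F.xi (E x)) - G (Ψ Φ (E x)) := by
      rw [hΦ, map_add, xi_incl, hxiΨ, add_zero]
    rw [hΦ, ← h2, h1]
    rfl
  have hdeg : ∀ i, ∀ x ∈ F.grC i, Φ x ∈ F'.grC i := by
    suffices h : ∀ n i, ∀ x ∈ F.wgr n i, Φ x ∈ F'.grC i from fun i => map_grC hV fun n => h n i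
    intro n
    induction n using Nat.strong_induction_on with
    | _ n ih =>
      intro i x hx
      have hΨ : Ψ Φ x ∈ F'.grC i := by
        simp only [Ψ, LinearMap.comp_apply, hJ n x (wgr_le_wt _ _ hx), map_smul]
        refine Submodule.smul_mem _ _ ?_
        have := tmulLift_comul_grC hV hV' (n := n) (e := 0) (q := F'.xi ∘ₗ Φ ∘ₗ E) (A := Φ)
          (fun m hm j y hy => by
            simp only [LinearMap.comp_apply, hE m y (wgr_le_wt _ _ hy), map_smul]
            exact Submodule.smul_mem _ _ (hxi' _ _ (ih m hm j y hy))) ih x hx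
        simpa using this
      rw [hΦ]
      exact add_mem (incl_grC (sub_mem (hf _ _ (xi_grC hV _ (wgr_le_grC _ _ hx))) (hG _ _ hΨ))) hΨ
  refine ⟨Φ, ⟨hdeg, F.wt_internal.linearMap_ext fun n => ?_⟩, hxiΦ⟩
  induction n using Nat.strong_induction_on with
  | _ n ih =>
    intro x hx
    have h1 := comul_lifting hV hV' (n := n) (e := 0) (q := F'.xi ∘ₗ Φ ∘ₗ E) (A := Φ)
      (fun i y hy => hxi' _ _ (hdeg _ _ (by simpa using hEC.1 i y hy))) hdeg ih x hx
    have h2 : lifting hV' (F'.xi ∘ₗ Φ ∘ₗ E) Φ = Φ ∘ₗ E := LinearMap.ext fun x => (hΦE x).symm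
    have h3 := LinearMap.congr_fun hEC.2 x
    rw [par_zero] at h3
    rw [h2, par_zero, LinearMap.comp_id] at h1
    have h4 : F'.comul (Φ (E x)) = TensorProduct.map Φ Φ (F.comul (E x)) := by
      have e1 : TensorProduct.map (Φ ∘ₗ E) Φ = TensorProduct.map Φ Φ
          ∘ₗ TensorProduct.map E LinearMap.id := by
        rw [← TensorProduct.map_comp, LinearMap.comp_id]
      have e2 : TensorProduct.map Φ (Φ ∘ₗ E) = TensorProduct.map Φ Φ
          ∘ₗ TensorProduct.map LinearMap.id E := by
        rw [← TensorProduct.map_comp, LinearMap.comp_id]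
      rw [e1, e2] at h1
      simp only [LinearMap.comp_apply, LinearMap.add_apply] at h1 h3
      rw [h1, h3, map_add]
    rw [hE n x hx] at h4
    simp only [map_smul] at h4
    exact smul_right_injective _ (show ((n + 1 : ℕ) : K) ≠ 0 from Nat.cast_ne_zero.2 (by omega)) h4

end

end CofreeData

namespace CofreeData

variable {V' : Type} [AddCommGroup V'] [Module K V'] {grV' : ℤ → Submodule K V'}
  {F : CofreeData K V grV} {F' : CofreeData K V' grV'}

theorem IsCoderivation.comul_apply {m : ℤ} {D : F.C →ₗ[K] F.C} (hD : F.IsCoderivation m D)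
    (x : F.C) : F.comul (D x) = TensorProduct.map D LinearMap.id (F.comul x)
      + TensorProduct.map (F.par m) D (F.comul x) :=
  LinearMap.congr_fun hD.2 x

theorem IsMorphism.comul_apply {Φ : F.C →ₗ[K] F'.C} (hΦ : F.IsMorphism F' Φ) (x : F.C) :
    F'.comul (Φ x) = TensorProduct.map Φ Φ (F.comul x) :=
  LinearMap.congr_fun hΦ.2 x

variable [CharZero K]

theorem IsCoderivation.comp_eq_comp (hV : ⨆ i, grV i = ⊤) {Q : F'.C →ₗ[K] F'.C}
    {Q' : F.C →ₗ[K] F.C} {Φ : F.C →ₗ[K] F'.C} (hQ : F'.IsCoderivation 1 Q)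
    (hQ' : F.IsCoderivation 1 Q') (hΦ : F.IsMorphism F' Φ)
    (h : ∀ x, F'.comul (Q (Φ x) - Φ (Q' x)) = 0 → Q (Φ x) - Φ (Q' x) = 0) :
    Q ∘ₗ Φ = Φ ∘ₗ Q' := by
  refine F.wt_internal.linearMap_ext fun n => ?_
  induction n using Nat.strong_induction_on with
  | _ n ih =>
    intro x hx
    refine sub_eq_zero.1 (h x ?_)
    have hp : F'.par 1 ∘ₗ Φ = Φ ∘ₗ F.par 1 := LinearMap.ext fun x => par_comm hΦ.1 1 x
    rw [map_sub, hQ.comul_apply, hΦ.comul_apply, hΦ.comul_apply, hQ'.comul_apply, map_add,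
      sub_eq_zero]
    simp only [TensorProduct.map_map, LinearMap.id_comp, LinearMap.comp_id]
    rw [map_comul_eq_of_lt hV ih (fun _ _ _ _ => rfl) x hx,
      map_comul_eq_of_lt hV (fun _ _ _ _ => rfl) ih x hx, hp]

theorem IsCoderivation.comp_self_eq_zero (hV : ⨆ i, grV i = ⊤) {Q : F.C →ₗ[K] F.C}
    (hQ : F.IsCoderivation 1 Q) (h : ∀ x, F.comul (Q (Q x)) = 0 → Q (Q x) = 0) :
    Q ∘ₗ Q = 0 := by
  refine F.wt_internal.linearMap_ext fun n => ?_
  induction n using Nat.strong_induction_on with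
  | _ n ih =>
    intro x hx
    refine h x ?_
    rw [hQ.comul_apply, hQ.comul_apply]
    have hp : F.par 1 ∘ₗ Q = - (Q ∘ₗ F.par 1) := LinearMap.ext fun x => par_anticomm hQ.1 x
    have e : TensorProduct.map Q LinearMap.id ∘ₗ TensorProduct.map (F.par 1) Q
        + TensorProduct.map (F.par 1) Q ∘ₗ TensorProduct.map Q LinearMap.id = 0 := by
      rw [← TensorProduct.map_comp, ← TensorProduct.map_comp, hp, LinearMap.id_comp,
        LinearMap.comp_id]
      exact TensorProduct.ext' fun x y => by simp [TensorProduct.neg_tmul]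
    have e' := LinearMap.congr_fun e (F.comul x)
    have h1 : TensorProduct.map (Q ∘ₗ Q) LinearMap.id (F.comul x) = 0 := by
      rw [map_comul_eq_of_lt hV ih (g' := LinearMap.id) (fun _ _ _ _ => rfl) x hx]
      simp
    have h2 : TensorProduct.map (F.par 1 ∘ₗ F.par 1) (Q ∘ₗ Q) (F.comul x) = 0 := by
      rw [map_comul_eq_of_lt hV (f' := F.par 1 ∘ₗ F.par 1) (fun _ _ _ _ => rfl) ih x hx]
      simp
    rw [TensorProduct.map_comp] at h2
    rw [← LinearMap.id_comp (LinearMap.id : F.C →ₗ[K] F.C), TensorProduct.map_comp] at h1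
    simp only [LinearMap.add_apply, LinearMap.comp_apply, LinearMap.zero_apply] at e' h1 h2
    rw [map_add, map_add, h1, h2, zero_add, add_zero]
    exact e'

/-- A coderivation that kills the cogenerators sends weight one (words of length two) to
cogenerators. -/
theorem IsCoderivation.comul_eq_zero_of_wt_one (hV : ⨆ i, grV i = ⊤) {Q : F.C →ₗ[K] F.C} {m : ℤ}
    (hQ : F.IsCoderivation m Q) (h0 : ∀ x ∈ F.wt 0, Q x = 0) : ∀ x ∈ F.wt 1, F.comul (Q x) = 0 := by
  intro x hx
  have h : ∀ m < 1, ∀ x ∈ F.wt m, Q x = (0 : F.C →ₗ[K] F.C) x := fun m hm x hx => by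
    obtain rfl : m = 0 := by omega
    exact h0 x hx
  rw [hQ.comul_apply, map_comul_eq_of_lt hV h (g' := LinearMap.id) (fun _ _ _ _ => rfl) x hx,
    map_comul_eq_of_lt hV (f' := F.par m) (fun _ _ _ _ => rfl) h x hx]
  simp

theorem IsMorphism.comul_word_one (hV : ⨆ i, grV i = ⊤) (hV' : ⨆ i, grV' i = ⊤)
    {Φ : F.C →ₗ[K] F'.C} (hΦ : F.IsMorphism F' Φ) {f : V →ₗ[K] V'}
    (hf : ∀ i, ∀ a ∈ grV i, f a ∈ grV' i) (hΦf : ∀ a, Φ (F.incl a) = F'.incl (f a))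
    (v : Fin 2 → V) : F'.comul (Φ (F.word 1 v)) = F'.comul (F'.word 1 fun i => f (v i)) := by
  suffices h : (F'.comul ∘ₗ Φ).compMultilinearMap (F.word 1)
      = (F'.comul.compMultilinearMap (F'.word 1)).compLinearMap fun _ => f from
    congrArg (fun g => g v) h
  refine MultilinearMap.eq_of_homogeneous hV fun d v hv => ?_
  have hw : F.word 1 v = F.mul hV (v 0) (F.incl (v 1)) := by
    rw [incl_apply, mul_word]
    congr 1
    funext i
    fin_cases i <;> rfl
  have hw' : F'.word 1 (fun i => f (v i)) = F'.mul hV' (f (v 0)) (F'.incl (f (v 1))) := by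
    rw [incl_apply, mul_word]
    congr 1
    funext i
    fin_cases i <;> rfl
  have h0 : v 0 ∈ grV (d 0 - 1 + 1) := by simpa using hv 0
  have h1 : v 1 ∈ grV (d 1 - 1 + 1) := by simpa using hv 1
  show F'.comul (Φ (F.word 1 v)) = F'.comul (F'.word 1 fun i => f (v i))
  rw [hw', hΦ.comul_apply, hw, comul_mul hV h0, comul_mul hV' (hf _ _ h0), par_incl h1,
    par_incl (hf _ _ h1)]
  simp [hΦf]

end CofreeData

/-- homotopy transfer / Lemma 4.2.1. Let `(L, Q)` be an `L∞`-algebra with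
cohomology `H = H(L, Q₁)` and let `f : H → L` be a quasi-isomorphism of complexes (`H`
carrying the zero differential).  Then there is an `L∞`-structure `Q̃` on `H` with `Q̃₁ = 0`
and `Q̃₂` the bracket induced by `Q₂` on cohomology, together with an `L∞`-quasi-isomorphism
from `(H, Q̃)` to `(L, Q)` whose first structure map is `f`. -/
theorem homotopy_transfer
    (K : Type) [Field K] [CharZero K]
    (L : Type) [AddCommGroup L] [Module K L] (grL : ℤ → Submodule K L)
    (hgrL : DirectSum.IsInternal grL)
    (F : CofreeData K L grL) (Q : F.C →ₗ[K] F.C)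
    (hQ : F.IsCoderivation 1 Q) (hQsq : Q ∘ₗ Q = 0)
    (H : Type) [AddCommGroup H] [Module K H] (grH : ℤ → Submodule K H)
    (hgrH : DirectSum.IsInternal grH)
    (FH : CofreeData K H grH)
    (f : H →ₗ[K] L)
    (hfdeg : ∀ i : ℤ, ∀ a ∈ grH i, f a ∈ grL i)
    -- f is a chain map from (H,0) to (L,Q₁):
    (hfchain : ∀ a : H, F.xi (Q (F.word 0 (fun _ => f a))) = 0)
    -- f induces an isomorphism H → H(L,Q₁):
    (hfinj : ∀ a : H, (∃ u : L, f a = F.xi (Q (F.word 0 (fun _ => u)))) → a = 0)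
    (hfsurj : ∀ y : L, F.xi (Q (F.word 0 (fun _ => y))) = 0 →
      ∃ (a : H) (u : L), y = f a + F.xi (Q (F.word 0 (fun _ => u)))) :
    ∃ Qt : FH.C →ₗ[K] FH.C,
      FH.IsCoderivation 1 Qt ∧ Qt ∘ₗ Qt = 0 ∧
      -- Q̃₁ = 0:
      (∀ a : H, FH.xi (Qt (FH.word 0 (fun _ => a))) = 0) ∧
      -- Q̃₂ is the bracket induced by Q₂ on cohomology:
      (∀ a b : H, ∃ u : L,
        f (FH.xi (Qt (FH.word 1 ![a, b])))
          = F.xi (Q (F.word 1 ![f a, f b])) + F.xi (Q (F.word 0 (fun _ => u)))) ∧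
      -- and there is an L∞-morphism F with F₁ = f (hence a quasi-isomorphism):
      (∃ Φ : FH.C →ₗ[K] F.C, FH.IsMorphism F Φ ∧ Q ∘ₗ Φ = Φ ∘ₗ Qt ∧
        ∀ a : H, FH.structMap F Φ 0 (fun _ => a) = f a) := by
  have hL : ⨆ i, grL i = ⊤ := hgrL.submodule_iSup_eq_top
  have hH : ⨆ i, grH i = ⊤ := hgrH.submodule_iSup_eq_top
  obtain ⟨d, hd⟩ : ∃ d : L →ₗ[K] L, ∀ y, F.xi (Q (F.incl y)) = d y :=
    ⟨F.xi ∘ₗ Q ∘ₗ F.incl, fun _ => rfl⟩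
  have hQQ : ∀ x, Q (Q x) = 0 := LinearMap.congr_fun hQsq
  have hQincl : ∀ y, Q (F.incl y) = F.incl (d y) := fun y => by
    rw [← hd]
    exact F.eq_incl_of_comul_eq_zero hL (by rw [hQ.comul_apply, F.comul_incl]; simp)
  simp only [← F.incl_apply, ← FH.incl_apply, hd] at hfchain hfinj hfsurj ⊢
  have hdd : ∀ y, d (d y) = 0 := fun y => by rw [← hd, ← hQincl, hQQ, map_zero]
  have hddeg : ∀ i, ∀ y ∈ grL i, d y ∈ grL (i + 1) := fun i y hy => by
    have h := F.xi_grC hL _ (hQ.1 (i - 1) _ (F.incl_grC (by simpa using hy)))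
    rwa [hd, sub_add_cancel] at h
  obtain ⟨p, h, hp, hh, hph⟩ := exists_graded_contraction hgrL hgrH hddeg hfdeg hdd hfchain
    hfinj hfsurj
  obtain ⟨D, hD⟩ : ∃ D : F.C →ₗ[K] L, ∀ x, D x = F.xi (Q x) - d (F.xi x) :=
    ⟨F.xi ∘ₗ Q - d ∘ₗ F.xi, fun _ => rfl⟩
  have hDdeg : ∀ i, ∀ x ∈ F.grC i, D x ∈ grL (i + 1 + 1) := fun i x hx => by
    rw [hD]
    exact sub_mem (F.xi_grC hL _ (hQ.1 i x hx)) (hddeg _ _ (F.xi_grC hL x hx))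
  have hDincl : ∀ y, D (F.incl y) = 0 := fun y => by rw [hD, hd, F.xi_incl, sub_self]
  have hDQ : ∀ x, D (Q x) = - d (F.xi (Q x)) := fun x => by rw [hD, hQQ, map_zero, zero_sub]
  obtain ⟨Φ, hΦ, hxiΦ⟩ := CofreeData.exists_isMorphism (F := FH) (F' := F) hH hL hfdeg (G := h ∘ₗ D)
    (fun i x hx => hh _ _ (hDdeg i x hx)) (fun a => by rw [LinearMap.comp_apply, hDincl, map_zero])
  simp only [LinearMap.comp_apply] at hxiΦ
  have hq : ∀ i, ∀ x ∈ FH.grC i, (p ∘ₗ D ∘ₗ Φ) x ∈ grH (i + 1 + 1) := fun i x hx =>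
    hp _ _ (hDdeg i _ (hΦ.1 i x hx))
  have hQt : FH.IsCoderivation 1 (CofreeData.lifting hH (p ∘ₗ D ∘ₗ Φ) LinearMap.id) :=
    CofreeData.isCoderivation_lifting hH hq
  have hxiQt := CofreeData.xi_lifting (F := FH) (F' := FH) hH (p ∘ₗ D ∘ₗ Φ) LinearMap.id
  generalize CofreeData.lifting hH (p ∘ₗ D ∘ₗ Φ) LinearMap.id = Qt at hQt hxiQt
  simp only [LinearMap.comp_apply] at hxiQt
  have hΦincl : ∀ a, Φ (FH.incl a) = F.incl (f a) := fun a => by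
    have h1 := F.eq_incl_of_comul_eq_zero hL (x := Φ (FH.incl a))
      (by rw [hΦ.comul_apply, FH.comul_incl, map_zero])
    have h2 := hxiΦ (FH.incl a)
    rw [h1, hDincl, map_zero, sub_zero, FH.xi_incl, F.xi_incl] at h2
    rw [h1, h2]
  have hQΦ : ∀ x, F.xi (Q (Φ x)) = D (Φ x) - d (h (D (Φ x))) := fun x => by
    have h1 := hD (Φ x)
    rw [hxiΦ, map_sub, hfchain, zero_sub, sub_neg_eq_add] at h1
    exact eq_sub_of_add_eq h1.symm
  have hdD : ∀ x, d (D (Φ x)) = - D (Q (Φ x)) := fun x => by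
    rw [hDQ, neg_neg, hQΦ, map_sub, hdd, sub_zero]
  have hcomm : Q ∘ₗ Φ = Φ ∘ₗ Qt := hQ.comp_eq_comp hH hQt hΦ fun x hx => by
    refine F.eq_zero_of_comul_eq_zero hL hx ?_
    have h1 : D (Q (Φ x)) = D (Φ (Qt x)) := by
      rw [← sub_eq_zero, ← map_sub, F.eq_incl_of_comul_eq_zero hL hx, hDincl]
    rw [map_sub, hQΦ, hxiΦ, hxiQt, ← h1, ← neg_neg (D (Q (Φ x))), ← hdD, map_neg, sub_neg_eq_add,
      sub_eq_zero, ← sub_eq_iff_eq_add, sub_sub, hph, sub_sub_cancel]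
  have hcomm' : ∀ x, Q (Φ x) = Φ (Qt x) := LinearMap.congr_fun hcomm
  have hQtincl : ∀ a, Qt (FH.incl a) = 0 := fun a => by
    refine FH.eq_zero_of_comul_eq_zero hH (by rw [hQt.comul_apply, FH.comul_incl]; simp) ?_
    rw [hxiQt, hΦincl, hDincl, map_zero]
  refine ⟨Qt, hQt, hQt.comp_self_eq_zero hH fun x hx => ?_, fun a => by rw [hQtincl, map_zero],
    fun a b => ?_, Φ, hΦ, hcomm, fun a => ?_⟩
  · have h1 := FH.eq_incl_of_comul_eq_zero hH hx
    have h2 : Φ (Qt (Qt x)) = 0 := by rw [← hcomm', ← hcomm', hQQ]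
    rw [h1, hΦincl] at h2
    rw [h1, hfinj (FH.xi (Qt (Qt x))) ⟨0, by rw [← F.xi_incl (f _), h2, map_zero, map_zero]⟩,
      map_zero]
  · let w := FH.word 1 ![a, b]
    have h1 : D (Φ w) = F.xi (Q (F.word 1 ![f a, f b])) := by
      have h2 := hΦ.comul_word_one hH hL hfdeg hΦincl ![a, b]
      have h3 : (fun i => f (![a, b] i)) = ![f a, f b] := by
        funext i
        fin_cases i <;> rfl
      rw [h3, ← sub_eq_zero, ← map_sub] at h2
      have h4 := hDincl (F.xi (Φ w - F.word 1 ![f a, f b]))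
      rw [← F.eq_incl_of_comul_eq_zero hL h2, map_sub, sub_eq_zero] at h4
      rw [h4, hD, F.xi_word, map_zero, sub_zero]
    have h2 : FH.comul (Qt w) = 0 :=
      hQt.comul_eq_zero_of_wt_one hH (fun x hx => by rw [← FH.incl_xi hx, hQtincl]) _
        (FH.word_wt 1 _)
    have h3 : d (D (Φ w)) = 0 := by
      rw [hdD, hcomm', FH.eq_incl_of_comul_eq_zero hH h2, hΦincl, hDincl, neg_zero]
    refine ⟨- h (D (Φ w)), ?_⟩
    have h4 := hph (D (Φ w))
    rw [h3, map_zero, add_zero] at h4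
    rw [hxiQt, ← h1, map_neg, h4]
    abel
  · rw [CofreeData.structMap, ← FH.incl_apply, hΦincl, F.xi_incl]

end
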